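/- For every ε > 0 there is a constant C_ε > 0 such that for every integer y ≥ 1 there is an integer N₀ = N_{2,y} with: for all b with gcd(b,y) = 1, every real Q ≥ 1, and every finite set F ⊂ ℤ, one has ‖ sup_{N = 2^n > N₀, Q ≤ N^{1/10}} | Hi_{N,y,Q} ∗ 1_F | ‖_{ℓ²(ℤ)} ≤ C_ε · Q^{−1+ε} · |F|^{1/2}, where the supremum is over dyadic integers N = 2^n exceeding N₀. -/

import Mathlib

open scoped ENNReal

noncomputable section

/-- `e(t) = e^{2πit}`. -/
def e2pi (t : ℝ) : ℂ := Complex.exp (2 * Real.pi * Complex.I * t)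

/-- For real `x > 0`, `M̂_x(θ) = (1/x) Σ_{0 ≤ n < x} e(-nθ)`. -/
def Mhat (x θ : ℝ) : ℂ :=
  ((1 / x : ℝ) : ℂ) * ∑ n ∈ Finset.range ⌈x⌉₊, e2pi (-(n * θ))

/-- The Gauss-type sum `Υ(a,q)`. -/
def Ups (y : ℕ) (b : ℤ) (a : ℤ) (q : ℕ) : ℂ :=
  ((Nat.totient y : ℂ) / (Nat.totient (Nat.lcm y q) : ℂ)) *
    ∑ r ∈ (Finset.Icc 1 q).filter
        (fun r : ℕ => Nat.gcd r q = 1 ∧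
          (r : ℤ) % (Nat.gcd y q : ℤ) = b % (Nat.gcd y q : ℤ)),
      e2pi (-((((r : ℤ) * a : ℤ) : ℝ) / (q : ℝ)))

/-- The Ramanujan height `h_y(q)` of `q` relative to `y`. -/
def hgt (y q : ℕ) : ℕ :=
  if 1 < Nat.gcd y q ∧ Nat.gcd y q < q ∧ 1 < Nat.gcd (Nat.gcd y q) (q / Nat.gcd y q) then 0
  else Nat.lcm y q / y

/-- The multiplier piece `L̂^{a,q}_{N,y}(ξ) = Υ(a,q) M̂_{N/ℓ}(ℓ(ξ-a/q)) χ(ℓ²(ξ-a/q))`. -/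
def Lhat (χ : ℝ → ℝ) (y : ℕ) (b : ℤ) (N : ℝ) (a q : ℕ) (ξ : ℝ) : ℂ :=
  Ups y b (a : ℤ) q *
    Mhat (N / (Nat.lcm y q : ℝ)) ((Nat.lcm y q : ℝ) * (ξ - (a : ℝ) / (q : ℝ))) *
    ((χ ((Nat.lcm y q : ℝ) ^ 2 * (ξ - (a : ℝ) / (q : ℝ))) : ℝ) : ℂ)

/-- The kernel `L^{a,q}_{N,y}(x) = ∫₀¹ L̂^{a,q}_{N,y}(ξ) e(xξ) dξ`. -/
def Lker (χ : ℝ → ℝ) (y : ℕ) (b : ℤ) (N : ℝ) (a q : ℕ) (x : ℤ) : ℂ :=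
  ∫ ξ in (0:ℝ)..1, Lhat χ y b N a q ξ * e2pi ((x : ℝ) * ξ)

/-- The High kernel `Hi_{N,y,Q} = Σ_{q : Q ≤ h_y(q) ≤ N^{1/10}} Σ_{a ∈ A_q} L^{a,q}_{N,y}`. -/
def HiK (χ : ℝ → ℝ) (y : ℕ) (b : ℤ) (N : ℕ) (Q : ℝ) (x : ℤ) : ℂ :=
  ∑ q ∈ (Finset.Icc 1 (y * ⌈(N : ℝ) ^ ((1:ℝ)/10)⌉₊)).filter
      (fun q : ℕ => Q ≤ (hgt y q : ℝ) ∧ (hgt y q : ℝ) ≤ (N : ℝ) ^ ((1:ℝ)/10)),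
    ∑ a ∈ (Finset.Icc 1 q).filter (fun a : ℕ => Nat.gcd a q = 1),
      Lker χ y b (N : ℝ) a q x

/-- `(Hi_{N,y,Q} ∗ 1_F)(x)`. -/
def HiConv (χ : ℝ → ℝ) (y : ℕ) (b : ℤ) (N : ℕ) (Q : ℝ) (F : Finset ℤ) (x : ℤ) : ℂ :=
  ∑ z ∈ F, HiK χ y b N Q (x - z)

open MeasureTheory Measure

/-!
The denominators `q` are split into dyadic blocks according to their height,
`K ≤ h_y(q) < 2 K` with `K = 2 ^ j * Q`. Within one block the supports of the multipliers
`L̂^{a,q}_{N,y}` are pairwise disjoint, so that at each frequency at most one piece is active, and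
`|Υ(a,q)| ≤ 1 / φ(h_y(q)) ≲ log K / K` because `Υ` is essentially a Ramanujan sum.

At the scales where the whole block is present, the maximal function over the first `2 ^ s`
scales, with `s ≈ 2 log K`, is controlled by the Rademacher–Menshov inequality at the cost of a
factor `s`. At all later scales the multiplier is close to that of the averages along multiples of
the common denominator `D = y * ⌈2 K⌉!`, so that the Hardy–Littlewood maximal inequality, proved by
a `TT*` argument, applies. The block is incomplete only for `K ^ 10 ≤ N < (2 K) ^ 10`, that is, at
ten scales. A block thus contributes `O((log K) ^ 2 / K)`, which is summed over `j`.
-/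

section LpNorm

variable {α ε : Type*} [MeasurableSpace α] {μ : Measure α}

lemma eLpNorm_two_sq [ENorm ε] (f : α → ε) : eLpNorm f 2 μ ^ 2 = ∫⁻ x, ‖f x‖ₑ ^ 2 ∂μ := by
  simpa using eLpNorm_nnreal_pow_eq_lintegral (μ := μ) (f := f) (two_ne_zero (α := NNReal))

lemma eLpNorm_two_count_sq [MeasurableSingletonClass α] [ENorm ε] (f : α → ε) :
    eLpNorm f 2 count ^ 2 = ∑' x, ‖f x‖ₑ ^ 2 := by
  rw [eLpNorm_two_sq, lintegral_count]

lemma eLpNorm_iSup_of_monotone {p : ℝ≥0∞} (hp0 : p ≠ 0) (hp : p ≠ ∞) {f : ℕ → α → ℝ≥0∞}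
    (hf : ∀ n, Measurable (f n)) (hmono : Monotone f) :
    eLpNorm (fun x => ⨆ n, f n x) p μ = ⨆ n, eLpNorm (f n) p μ := by
  have hr : 0 < p.toReal := ENNReal.toReal_pos hp0 hp
  have iSup_rpow {r : ℝ} (h : 0 < r) (g : ℕ → ℝ≥0∞) : (⨆ n, g n) ^ r = ⨆ n, g n ^ r :=
    (ENNReal.orderIsoRpow r h).map_iSup g
  simp only [eLpNorm_eq_lintegral_rpow_enorm_toReal hp0 hp, enorm_eq_self, iSup_rpow hr]
  rw [lintegral_iSup (fun n => (hf n).pow_const _)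
    fun m n hmn x => ENNReal.rpow_le_rpow (hmono hmn x) hr.le, iSup_rpow (one_div_pos.2 hr)]

lemma eLpNorm_tsum_le {p : ℝ≥0∞} (hp1 : 1 ≤ p) (hp : p ≠ ∞) {f : ℕ → α → ℝ≥0∞}
    (hf : ∀ n, Measurable (f n)) :
    eLpNorm (fun x => ∑' n, f n x) p μ ≤ ∑' n, eLpNorm (f n) p μ := by
  simp only [ENNReal.tsum_eq_iSup_nat]
  rw [eLpNorm_iSup_of_monotone (one_pos.trans_le hp1).ne' hp
    (fun n => Finset.measurable_fun_sum _ fun i _ => hf i)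
    fun m n hmn x => Finset.sum_le_sum_of_subset (Finset.range_mono hmn)]
  refine iSup_mono fun n => ?_
  simpa only [← Finset.sum_fn] using eLpNorm_sum_le (fun i _ => (hf i).aestronglyMeasurable) hp1

end LpNorm

section Character

lemma norm_e2pi (t : ℝ) : ‖e2pi t‖ = 1 := by
  rw [e2pi, show (2 * Real.pi * Complex.I * t : ℂ) = ((2 * Real.pi * t : ℝ) : ℂ) * Complex.I by
    push_cast; ring]
  exact Complex.norm_exp_ofReal_mul_I _

@[fun_prop]
lemma continuous_e2pi : Continuous e2pi := by unfold e2pi; fun_prop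

lemma e2pi_add (s t : ℝ) : e2pi (s + t) = e2pi s * e2pi t := by
  simp only [e2pi, ← Complex.exp_add]
  congr 1
  push_cast
  ring

lemma e2pi_eq_one_iff {t : ℝ} : e2pi t = 1 ↔ ∃ n : ℤ, t = n := by
  rw [e2pi, Complex.exp_eq_one_iff]
  refine exists_congr fun n => ?_
  rw [mul_comm, mul_left_inj' Complex.two_pi_I_ne_zero]
  norm_cast

lemma e2pi_intCast (k : ℤ) : e2pi k = 1 := e2pi_eq_one_iff.2 ⟨k, rfl⟩

end Character

/-! ### Multipliers on the frequency circle -/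

section FourierMultiplier

/-- Lebesgue measure on `(0, 1]`, a fundamental domain of the frequency circle `ℝ/ℤ`. -/
abbrev circleMeasure : Measure ℝ := volume.restrict (Set.Ioc 0 1)

/-- The inverse Fourier transform `x ↦ ∫₀¹ G(ξ) e(xξ) dξ` on `ℤ` of a function of the frequency;
a Fourier multiplier `m` acts on `invFourier H` as `invFourier (m * H)`. -/
def invFourier (G : ℝ → ℂ) (x : ℤ) : ℂ := ∫ ξ in (0 : ℝ)..1, G ξ * e2pi (x * ξ)

lemma memLp_e2pi_comp {f : ℝ → ℝ} (hf : Continuous f) :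
    MemLp (fun ξ => e2pi (f ξ)) ∞ circleMeasure :=
  memLp_top_of_bound (continuous_e2pi.comp hf).aestronglyMeasurable 1 <|
    .of_forall fun _ => (norm_e2pi _).le

lemma intervalIntegrable_mul_e2pi {G : ℝ → ℂ} (hG : MemLp G 2 circleMeasure) (x : ℤ) :
    IntervalIntegrable (fun ξ => G ξ * e2pi (x * ξ)) volume 0 1 := by
  rw [intervalIntegrable_iff_integrableOn_Ioc_of_le zero_le_one]
  have hGe : MemLp (fun ξ => G ξ * e2pi (x * ξ)) 2 circleMeasure :=
    (memLp_e2pi_comp (f := fun ξ => x * ξ) (by fun_prop)).mul' hG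
  exact hGe.integrable one_le_two

lemma invFourier_sub {G H : ℝ → ℂ} (hG : MemLp G 2 circleMeasure) (hH : MemLp H 2 circleMeasure)
    (x : ℤ) : invFourier (G - H) x = invFourier G x - invFourier H x := by
  simp only [invFourier, Pi.sub_apply, sub_mul]
  exact intervalIntegral.integral_sub (intervalIntegrable_mul_e2pi hG x)
    (intervalIntegrable_mul_e2pi hH x)

lemma invFourier_sum {ι : Type*} {s : Finset ι} {G : ι → ℝ → ℂ}
    (hG : ∀ i ∈ s, MemLp (G i) 2 circleMeasure) (x : ℤ) :
    invFourier (∑ i ∈ s, G i) x = ∑ i ∈ s, invFourier (G i) x := by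
  simp only [invFourier, Finset.sum_apply, Finset.sum_mul]
  exact intervalIntegral.integral_finsetSum fun i hi => intervalIntegrable_mul_e2pi (hG i hi) x

lemma invFourier_const_smul (c : ℂ) (G : ℝ → ℂ) (x : ℤ) :
    invFourier (c • G) x = c * invFourier G x := by
  simp only [invFourier, Pi.smul_apply, smul_eq_mul, mul_assoc]
  exact intervalIntegral.integral_const_mul _ _

lemma invFourier_e2pi_mul (G : ℝ → ℂ) (z x : ℤ) :
    invFourier (fun ξ => e2pi (-(z * ξ)) * G ξ) x = invFourier G (x - z) := by
  refine intervalIntegral.integral_congr fun ξ _ => ?_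
  have : e2pi ((x - z : ℤ) * ξ) = e2pi (-(z * ξ)) * e2pi (x * ξ) := by
    rw [← e2pi_add]; congr 1; push_cast; ring
  simp only [this]
  ring

lemma invFourier_eq_fourierCoeffOn (G : ℝ → ℂ) (x : ℤ) :
    invFourier G x = fourierCoeffOn zero_lt_one G (-x) := by
  rw [fourierCoeffOn_eq_integral]
  simp only [sub_zero, div_one, one_smul, neg_neg, invFourier]
  refine intervalIntegral.integral_congr fun ξ _ => ?_
  simp only [fourier_coe_apply, e2pi, smul_eq_mul]
  rw [mul_comm]
  congr 2
  push_cast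
  ring

lemma eLpNorm_invFourier {G : ℝ → ℂ} (hG : MemLp G 2 circleMeasure) :
    eLpNorm (invFourier G) 2 count = eLpNorm G 2 circleMeasure := by
  have enorm_sq (z : ℂ) : ‖z‖ₑ ^ 2 = ENNReal.ofReal (‖z‖ ^ 2) := by
    rw [ENNReal.ofReal_pow (norm_nonneg _), ofReal_norm]
  have parseval : HasSum (fun x => ‖invFourier G x‖ ^ 2) (∫ ξ in (0 : ℝ)..1, ‖G ξ‖ ^ 2) := by
    simpa [Function.comp_def, invFourier_eq_fourierCoeffOn] using
      (Equiv.neg ℤ).hasSum_iff.2 (hasSum_sq_fourierCoeffOn (zero_lt_one' ℝ) hG)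
  refine (ENNReal.pow_right_strictMono two_ne_zero).injective (?_ : _ ^ 2 = _ ^ 2)
  rw [eLpNorm_two_count_sq, eLpNorm_two_sq]
  simp only [enorm_sq]
  rw [← ENNReal.ofReal_tsum_of_nonneg (fun _ => by positivity) parseval.summable,
    parseval.tsum_eq, intervalIntegral.integral_of_le zero_le_one,
    ofReal_integral_eq_lintegral_ofReal (by simpa using hG.integrable_norm_pow two_ne_zero)
      (.of_forall fun ξ => by positivity)]

/-- The exponential sum `∑_{z ∈ F} e(-zξ)`, the Fourier transform of `1_F`. -/
def expSum (F : Finset ℤ) (ξ : ℝ) : ℂ := ∑ z ∈ F, e2pi (-(z * ξ))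

lemma memLp_expSum (F : Finset ℤ) : MemLp (expSum F) ∞ circleMeasure :=
  memLp_finsetSum F fun z _ => memLp_e2pi_comp (f := fun ξ => -(z * ξ)) (by fun_prop)

lemma sum_invFourier_sub {G : ℝ → ℂ} (hG : MemLp G 2 circleMeasure) (F : Finset ℤ) (x : ℤ) :
    ∑ z ∈ F, invFourier G (x - z) = invFourier (G * expSum F) x := by
  have hmul : G * expSum F = ∑ z ∈ F, fun ξ => e2pi (-(z * ξ)) * G ξ := by
    ext ξ
    simp [expSum, Finset.mul_sum, mul_comm]
  have hmem (z : ℤ) : MemLp (fun ξ => e2pi (-(z * ξ)) * G ξ) 2 circleMeasure :=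
    hG.mul' (memLp_e2pi_comp (f := fun ξ => -(z * ξ)) (by fun_prop))
  simp only [hmul, invFourier_sum fun z _ => hmem z, invFourier_e2pi_mul]

lemma invFourier_one (x : ℤ) : invFourier 1 x = if x = 0 then 1 else 0 := by
  split_ifs with hx
  · simp [invFourier, hx, e2pi]
  · have hc : 2 * Real.pi * Complex.I * x ≠ 0 :=
      mul_ne_zero Complex.two_pi_I_ne_zero (Int.cast_ne_zero.2 hx)
    have hexp (ξ : ℝ) :
        (1 : ℝ → ℂ) ξ * e2pi (x * ξ) = Complex.exp (2 * Real.pi * Complex.I * x * ξ) := by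
      simp [e2pi, mul_assoc]
    have hperiod : Complex.exp (2 * Real.pi * Complex.I * x) = 1 := by
      simpa [e2pi] using e2pi_intCast x
    simp only [invFourier, hexp, integral_exp_mul_complex hc]
    simp [hperiod]

lemma eLpNorm_expSum (F : Finset ℤ) :
    eLpNorm (expSum F) 2 circleMeasure = (F.card : ℝ≥0∞) ^ (1 / 2 : ℝ) := by
  have hcoeff (x : ℤ) : invFourier (expSum F) x = if x ∈ F then 1 else 0 := by
    rw [← one_mul (expSum F), ← sum_invFourier_sub (G := 1) (memLp_const 1)]
    simp [invFourier_one, sub_eq_zero]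
  rw [← eLpNorm_invFourier ((memLp_expSum F).mono_exponent le_top)]
  refine (ENNReal.pow_right_strictMono two_ne_zero).injective (?_ : _ ^ 2 = _ ^ 2)
  rw [eLpNorm_two_count_sq, ← ENNReal.rpow_mul_natCast,
    tsum_eq_sum (s := F) fun x hx => by simp [hcoeff, hx],
    Finset.sum_congr rfl (g := fun _ => 1) fun x hx => by simp [hcoeff, hx]]
  norm_num

end FourierMultiplier

section MaximalMultiplier

lemma eLpNorm_two_count_le_tsum {ι ε : Type*} [MeasurableSpace ι] [MeasurableSingletonClass ι]
    [ENorm ε] (f : ι → ε) : eLpNorm f 2 count ≤ ∑' i, ‖f i‖ₑ := by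
  rw [← ENNReal.pow_le_pow_left_iff two_ne_zero, eLpNorm_two_count_sq]
  simp only [pow_two]
  rw [← ENNReal.tsum_mul_right]
  exact ENNReal.tsum_le_tsum fun i => by gcongr; exact ENNReal.le_tsum i

variable {H : ℝ → ℂ} {B : ℝ≥0∞}

lemma eLpNorm_squareFunction_le (hH : MemLp H 2 circleMeasure) {d : ℕ → ℝ → ℂ}
    (hd : ∀ n, MemLp (d n) ∞ circleMeasure) (hB : ∀ ξ, eLpNorm (fun n => d n ξ) 2 count ≤ B) :
    eLpNorm (fun x => eLpNorm (fun n => invFourier (d n * H) x) 2 count) 2 count ≤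
      B * eLpNorm H 2 circleMeasure := by
  have parseval (n : ℕ) : ∑' x, ‖invFourier (d n * H) x‖ₑ ^ 2 =
      ∫⁻ ξ, ‖d n ξ‖ₑ ^ 2 * ‖H ξ‖ₑ ^ 2 ∂circleMeasure := by
    rw [← eLpNorm_two_count_sq, eLpNorm_invFourier (hH.mul (hd n)), eLpNorm_two_sq]
    simp only [Pi.mul_apply, enorm_mul, mul_pow]
  have hH_meas : AEMeasurable (fun ξ => ‖H ξ‖ₑ ^ 2) circleMeasure := hH.1.enorm.pow_const 2
  rw [← ENNReal.pow_le_pow_left_iff two_ne_zero]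
  calc eLpNorm (fun x => eLpNorm (fun n => invFourier (d n * H) x) 2 count) 2 count ^ 2
      = ∑' n, ∫⁻ ξ, ‖d n ξ‖ₑ ^ 2 * ‖H ξ‖ₑ ^ 2 ∂circleMeasure := by
        simp only [eLpNorm_two_count_sq, enorm_eq_self, ← parseval]
        exact ENNReal.tsum_comm
    _ = ∫⁻ ξ, eLpNorm (fun n => d n ξ) 2 count ^ 2 * ‖H ξ‖ₑ ^ 2 ∂circleMeasure := by
        simp only [eLpNorm_two_count_sq, ← ENNReal.tsum_mul_right]
        exact (lintegral_tsum fun n => ((hd n).1.enorm.pow_const 2).mul hH_meas).symm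
    _ ≤ ∫⁻ ξ, B ^ 2 * ‖H ξ‖ₑ ^ 2 ∂circleMeasure := by gcongr with ξ; exact hB ξ
    _ = (B * eLpNorm H 2 circleMeasure) ^ 2 := by
        rw [lintegral_const_mul'' _ hH_meas, mul_pow, eLpNorm_two_sq]

lemma eLpNorm_iSup_invFourier_le (hH : MemLp H 2 circleMeasure) {d : ℕ → ℝ → ℂ}
    (hd : ∀ n, MemLp (d n) ∞ circleMeasure) (hB : ∀ ξ, ∑' n, ‖d n ξ‖ₑ ≤ B) :
    eLpNorm (fun x => ⨆ n, ‖invFourier (d n * H) x‖ₑ) 2 count ≤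
      B * eLpNorm H 2 circleMeasure :=
  (eLpNorm_mono_enorm fun _ => iSup_le fun n => enorm_le_eLpNorm_count _ n two_ne_zero).trans <|
    eLpNorm_squareFunction_le hH hd fun ξ => (eLpNorm_two_count_le_tsum _).trans (hB ξ)

lemma eLpNorm_invFourier_mul_le (hH : MemLp H 2 circleMeasure) {m : ℝ → ℂ}
    (hm : MemLp m ∞ circleMeasure) (hB : ∀ ξ, ‖m ξ‖ₑ ≤ B) :
    eLpNorm (invFourier (m * H)) 2 count ≤ B * eLpNorm H 2 circleMeasure := by
  rw [eLpNorm_invFourier (hH.mul hm)]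
  refine (eLpNorm_smul_le_eLpNorm_top_mul_eLpNorm 2 hH.1 m).trans ?_
  gcongr
  exact eLpNormEssSup_le_of_ae_enorm_bound (.of_forall hB)

/-! ### The Rademacher–Menshov inequality -/

lemma enorm_le_add_sum_dyadic_squareFunction {E : Type*} [NormedAddCommGroup E] (s : ℕ) :
    ∀ (b : ℕ → E) {n : ℕ}, n < 2 ^ s → ‖b n‖ₑ ≤ ‖b 0‖ₑ + ∑ i ∈ Finset.range s,
      eLpNorm (fun k => b ((k + 1) * 2 ^ i) - b (k * 2 ^ i)) 2 count := by
  induction s with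
  | zero =>
    intro b n hn
    obtain rfl : n = 0 := by simpa using hn
    simp
  | succ s ih =>
    intro b n hn
    have finest_step : ‖b n‖ₑ ≤
        ‖b (2 * (n / 2))‖ₑ + eLpNorm (fun k => b (k + 1) - b k) 2 count := by
      rcases Nat.even_or_odd' n with ⟨m, rfl | rfl⟩
      · simp
      · rw [show (2 * m + 1) / 2 = m by omega]
        calc ‖b (2 * m + 1)‖ₑ = ‖b (2 * m) + (b (2 * m + 1) - b (2 * m))‖ₑ := by
              rw [add_sub_cancel]
          _ ≤ ‖b (2 * m)‖ₑ + ‖b (2 * m + 1) - b (2 * m)‖ₑ := enorm_add_le _ _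
          _ ≤ _ := by
              gcongr
              exact enorm_le_eLpNorm_count (fun k => b (k + 1) - b k) (2 * m) two_ne_zero
    have coarse := ih (fun k => b (2 * k)) (n := n / 2) (by omega)
    simp only [Finset.sum_range_succ', pow_succ', pow_zero, mul_one, ← add_assoc,
      mul_left_comm _ 2] at coarse ⊢
    exact finest_step.trans (by gcongr)

lemma tsum_enorm_sub_mul_le {E : Type*} [NormedAddCommGroup E] (m : ℕ → E) (l : ℕ) :
    ∑' k, ‖m ((k + 1) * l) - m (k * l)‖ₑ ≤ ∑' n, ‖m (n + 1) - m n‖ₑ := by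
  have enorm_sub_le (a : ℕ) : ‖m (a + l) - m a‖ₑ ≤
      ∑ j ∈ Finset.range l, ‖m (a + j + 1) - m (a + j)‖ₑ := by
    have telescope := Finset.sum_range_sub (fun j => m (a + j)) l
    rw [add_zero] at telescope
    exact telescope ▸ enorm_sum_le _ _
  rw [ENNReal.tsum_eq_iSup_nat]
  refine iSup_le fun N => le_trans ?_ (ENNReal.sum_le_tsum (Finset.range (N * l)))
  induction N with
  | zero => simp
  | succ N ih =>
    rw [Finset.sum_range_succ, add_mul, one_mul, Finset.sum_range_add]
    exact add_le_add ih (enorm_sub_le (N * l))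

lemma eLpNorm_iSup_lt_two_pow_invFourier_le (hH : MemLp H 2 circleMeasure) {m : ℕ → ℝ → ℂ}
    (hm : ∀ n, MemLp (m n) ∞ circleMeasure) (h0 : ∀ ξ, ‖m 0 ξ‖ₑ ≤ B)
    (hvar : ∀ ξ, ∑' n, ‖m (n + 1) ξ - m n ξ‖ₑ ≤ B) (s : ℕ) :
    eLpNorm (fun x => ⨆ (n : ℕ) (_ : n < 2 ^ s), ‖invFourier (m n * H) x‖ₑ) 2 count ≤
      (s + 1) * (B * eLpNorm H 2 circleMeasure) := by
  set S : ℕ → ℤ → ℝ≥0∞ := fun i x =>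
    eLpNorm (fun k => invFourier ((m ((k + 1) * 2 ^ i) - m (k * 2 ^ i)) * H) x) 2 count
  have pointwise (x : ℤ) : (⨆ (n : ℕ) (_ : n < 2 ^ s), ‖invFourier (m n * H) x‖ₑ) ≤
      ((fun x => ‖invFourier (m 0 * H) x‖ₑ) + ∑ i ∈ Finset.range s, S i) x := by
    refine iSup₂_le fun n hn => ?_
    simpa [S, sub_mul, invFourier_sub (hH.mul (hm _)) (hH.mul (hm _))] using
      enorm_le_add_sum_dyadic_squareFunction s (fun n => invFourier (m n * H) x) hn
  have square_function (i : ℕ) : eLpNorm (S i) 2 count ≤ B * eLpNorm H 2 circleMeasure :=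
    eLpNorm_squareFunction_le hH (fun k => (hm _).sub (hm _)) fun ξ =>
      (eLpNorm_two_count_le_tsum _).trans <|
        (tsum_enorm_sub_mul_le (fun n => m n ξ) (2 ^ i)).trans (hvar ξ)
  have measurable (f : ℤ → ℝ≥0∞) : AEStronglyMeasurable f count :=
    (measurable_of_countable f).aestronglyMeasurable
  calc _ ≤ eLpNorm (fun x => ‖invFourier (m 0 * H) x‖ₑ) 2 count
        + ∑ i ∈ Finset.range s, eLpNorm (S i) 2 count :=
        (eLpNorm_mono_enorm pointwise).trans <|
          (eLpNorm_add_le (measurable _) (measurable _) one_le_two).trans <|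
            add_le_add_right (eLpNorm_sum_le (fun i _ => measurable _) one_le_two) _
    _ ≤ B * eLpNorm H 2 circleMeasure + s * (B * eLpNorm H 2 circleMeasure) := by
        gcongr
        · exact (eLpNorm_enorm _).trans_le (eLpNorm_invFourier_mul_le hH (hm 0) h0)
        · simpa using Finset.sum_le_card_nsmul (Finset.range s) _ _ fun i _ => square_function i
    _ = _ := by ring

end MaximalMultiplier

/-! ### The Hardy–Littlewood maximal inequality -/

section HardyLittlewood

lemma eLpNorm_two_count_iSup_le {ι κ : Type*} [Nonempty κ] [MeasurableSpace ι]
    [MeasurableSingletonClass ι] {A : κ → ι → ℝ≥0∞} {C : ℝ≥0∞}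
    (h : ∀ (ν : ι → κ) (S : Finset ι), ∑ x ∈ S, A (ν x) x ^ 2 ≤ C ^ 2) :
    eLpNorm (fun x => ⨆ n, A n x) 2 count ≤ C := by
  classical
  rw [← ENNReal.pow_le_pow_left_iff two_ne_zero, eLpNorm_two_count_sq, ENNReal.tsum_eq_iSup_sum]
  refine iSup_le fun S => ?_
  have linearize (x : ι) : (⨆ n, A n x) ^ 2 = ⨆ ν : ι → κ, A (ν x) x ^ 2 := by
    have surjective_eval : Function.Surjective fun ν : ι → κ => ν x := fun n => ⟨fun _ => n, rfl⟩
    rw [ENNReal.iSup_pow, surjective_eval.iSup_comp fun n => A n x ^ 2]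
  simp only [enorm_eq_self, linearize]
  rw [ENNReal.finsetSum_iSup fun ν ν' => ?_]
  · exact iSup_le fun ν => h ν S
  · refine ⟨fun x => if A (ν x) x ≤ A (ν' x) x then ν' x else ν x, fun x => ?_⟩
    dsimp only
    split_ifs with hx
    · exact ⟨by gcongr, le_rfl⟩
    · exact ⟨le_rfl, by gcongr; exact (not_le.1 hx).le⟩

/-- If `T` is the operator with kernel `K` and `a = T f`, a bound for `T* a` gives one for `T f`,
since `‖T f‖² = ⟨f, T* T f⟩`. -/
lemma sum_sq_sum_mul_le_of_dual {ι κ : Type*} {S : Finset ι} {Z : Finset κ} {K : ι → κ → ℝ}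
    {f : κ → ℝ} {a : ι → ℝ} {c : ℝ} (hc : 0 ≤ c) (ha : ∀ x, a x = ∑ z ∈ Z, K x z * f z)
    (hdual : ∑ z ∈ Z, (∑ x ∈ S, a x * K x z) ^ 2 ≤ c * ∑ x ∈ S, a x ^ 2) :
    ∑ x ∈ S, a x ^ 2 ≤ c * ∑ z ∈ Z, f z ^ 2 := by
  set A := ∑ x ∈ S, a x ^ 2
  have hf : 0 ≤ ∑ z ∈ Z, f z ^ 2 := Finset.sum_nonneg fun _ _ => sq_nonneg _
  have pairing : A = ∑ z ∈ Z, f z * ∑ x ∈ S, a x * K x z := by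
    simp only [A, Finset.mul_sum]
    rw [Finset.sum_comm]
    refine Finset.sum_congr rfl fun x _ => ?_
    rw [pow_two]
    nth_rw 2 [ha x]
    rw [Finset.mul_sum]
    exact Finset.sum_congr rfl fun z _ => by ring
  have cauchy_schwarz : A * A ≤ c * (∑ z ∈ Z, f z ^ 2) * A := by
    calc A * A = (∑ z ∈ Z, f z * ∑ x ∈ S, a x * K x z) ^ 2 := by rw [← pairing, pow_two]
      _ ≤ (∑ z ∈ Z, f z ^ 2) * ∑ z ∈ Z, (∑ x ∈ S, a x * K x z) ^ 2 :=
          Finset.sum_mul_sq_le_sq_mul_sq Z _ _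
      _ ≤ (∑ z ∈ Z, f z ^ 2) * (c * A) := by gcongr
      _ = c * (∑ z ∈ Z, f z ^ 2) * A := by ring
  have hA : 0 ≤ A := Finset.sum_nonneg fun _ _ => sq_nonneg _
  rcases hA.eq_or_lt with hA | hA
  · rw [← hA]; positivity
  · exact le_of_mul_le_mul_right cauchy_schwarz hA

lemma sum_mul_le_sqrt_mul_sum_sq {ι : Type*} {S : Finset ι} {a t : ι → ℝ} {c : ℝ} (hc : 0 ≤ c)
    (h : ∑ x ∈ S, t x ^ 2 ≤ c * ∑ x ∈ S, a x ^ 2) :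
    ∑ x ∈ S, a x * t x ≤ √c * ∑ x ∈ S, a x ^ 2 := by
  have hA : 0 ≤ ∑ x ∈ S, a x ^ 2 := Finset.sum_nonneg fun _ _ => sq_nonneg _
  refine (abs_le_of_sq_le_sq' ?_ (by positivity)).2
  calc (∑ x ∈ S, a x * t x) ^ 2
      ≤ (∑ x ∈ S, a x ^ 2) * ∑ x ∈ S, t x ^ 2 := Finset.sum_mul_sq_le_sq_mul_sq S a t
    _ ≤ (∑ x ∈ S, a x ^ 2) * (c * ∑ x ∈ S, a x ^ 2) := by gcongr
    _ = (√c * ∑ x ∈ S, a x ^ 2) ^ 2 := by rw [mul_pow, Real.sq_sqrt hc]; ring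

variable {G : Type*} [AddCommGroup G]

open Classical in
/-- The kernel `K(x, z)` of the symmetric average `f ↦ N⁻¹ ∑_{|i| < N} f(x + i • d)`; it vanishes
for `N = 0`. -/
def averageKernel (d : G) (N : ℕ) (x z : G) : ℝ :=
  (∑ i ∈ Finset.Ioo (-(N : ℤ)) N, if x + i • d = z then 1 else 0) / N

lemma averageKernel_nonneg (d : G) (N : ℕ) (x z : G) : 0 ≤ averageKernel d N x z := by
  unfold averageKernel; positivity

open Classical in
lemma sum_averageKernel_mul (d : G) (N : ℕ) (x : G) (Z : Finset G) (f : G → ℝ) :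
    ∑ z ∈ Z, averageKernel d N x z * f z =
      (∑ i ∈ Finset.Ioo (-(N : ℤ)) N, if x + i • d ∈ Z then f (x + i • d) else 0) / N := by
  simp only [averageKernel, div_mul_eq_mul_div, ← Finset.sum_div, Finset.sum_mul, ite_mul, one_mul,
    zero_mul]
  rw [Finset.sum_comm]
  simp only [Finset.sum_ite_eq]

lemma sum_Ioo_ite_div_le {N : ℕ} {p : ℤ → Prop} [DecidablePred p] {f : ℤ → ℝ} {c : ℝ}
    (hc : 0 ≤ c) (hf : ∀ i ∈ Finset.Ioo (-(N : ℤ)) N, f i ≤ c) :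
    (∑ i ∈ Finset.Ioo (-(N : ℤ)) N, if p i then f i else 0) / N ≤ 2 * c := by
  have card_le : ((Finset.Ioo (-(N : ℤ)) N).card : ℝ) ≤ 2 * N := by
    rw [Int.card_Ioo]; exact_mod_cast (by omega : (↑N - -↑N - 1 : ℤ).toNat ≤ 2 * N)
  refine div_le_of_le_mul₀ (by positivity) (by positivity) ?_
  calc _ ≤ ∑ _ ∈ Finset.Ioo (-(N : ℤ)) N, c := by
        refine Finset.sum_le_sum fun i hi => ?_
        split_ifs
        exacts [hf i hi, hc]
    _ ≤ 2 * N * c := by rw [Finset.sum_const, nsmul_eq_mul]; gcongr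
    _ = 2 * c * N := by ring

lemma averageKernel_le_two (d : G) (N : ℕ) (x z : G) : averageKernel d N x z ≤ 2 := by
  classical
  rw [← mul_one 2]
  exact sum_Ioo_ite_div_le (f := fun _ => 1) zero_le_one fun _ _ => le_rfl

lemma sum_averageKernel_le_two (d : G) (N : ℕ) (x : G) (Z : Finset G) :
    ∑ z ∈ Z, averageKernel d N x z ≤ 2 := by
  classical
  simpa only [sum_averageKernel_mul, mul_one] using
    (sum_averageKernel_mul d N x Z fun _ => 1).trans_le
      (sum_Ioo_ite_div_le (f := fun _ => 1) zero_le_one fun _ _ => le_rfl)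

lemma averageKernel_add_zsmul_le (d : G) {N : ℕ} (x x' : G) {j : ℤ}
    (hj : j ∈ Finset.Ioo (-(N : ℤ)) N) :
    averageKernel d N x (x' + j • d) ≤ 2 * averageKernel d (2 * N) x x' := by
  classical
  have hN : (0 : ℝ) < N := by have := Finset.mem_Ioo.1 hj; exact_mod_cast (by omega : 0 < N)
  rw [averageKernel, averageKernel, Nat.cast_mul (α := ℝ), Nat.cast_two,
    ← mul_div_assoc, mul_div_mul_left _ _ two_ne_zero, Finset.sum_boole, Finset.sum_boole]
  refine div_le_div_of_nonneg_right (Nat.cast_le.2 ?_) hN.le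
  refine Finset.card_le_card_of_injOn (fun i => i - j) (fun i hi => ?_)
    (sub_left_injective.injOn)
  simp only [Finset.coe_filter, Finset.mem_Ioo, Set.mem_ofPred_eq] at hi hj ⊢
  refine ⟨by push_cast; omega, ?_⟩
  rw [sub_smul, ← add_sub_assoc, hi.2, add_sub_cancel_right]

lemma sum_averageKernel_mul_le_of_le (d : G) {N N' : ℕ} (h : N' ≤ N) (x x' : G) (Z : Finset G) :
    ∑ z ∈ Z, averageKernel d N' x' z * averageKernel d N x z ≤
      4 * averageKernel d (2 * N) x x' := by
  classical
  rw [sum_averageKernel_mul]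
  refine (sum_Ioo_ite_div_le (c := 2 * averageKernel d (2 * N) x x')
    (mul_nonneg two_pos.le (averageKernel_nonneg ..)) fun j hj => ?_).trans_eq (by ring)
  rw [Finset.mem_Ioo] at hj
  exact averageKernel_add_zsmul_le d x x' (Finset.mem_Ioo.2 (by omega))

lemma sum_averageKernel_mul_le (d : G) (N N' : ℕ) (x x' : G) (Z : Finset G) :
    ∑ z ∈ Z, averageKernel d N x z * averageKernel d N' x' z ≤
      4 * (averageKernel d (2 * N) x x' + averageKernel d (2 * N') x' x) := by
  have h0 := averageKernel_nonneg d (2 * N) x x'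
  have h0' := averageKernel_nonneg d (2 * N') x' x
  rcases le_total N' N with h | h
  · simp only [mul_comm (averageKernel d N x _)]
    linarith [sum_averageKernel_mul_le_of_le d h x x' Z]
  · linarith [sum_averageKernel_mul_le_of_le d h x' x Z]

/-- The linearized maximal averages along multiples of `d`, restricted to the finite set `S`,
are bounded on `ℓ²` with squared constant `c`. -/
def MaximalAverageBound (d : G) (S : Finset G) (c : ℝ) : Prop :=
  ∀ (N : G → ℕ) (Z : Finset G) (f : G → ℝ), (∀ z, 0 ≤ f z) →
    ∑ x ∈ S, (∑ z ∈ Z, averageKernel d (N x) x z * f z) ^ 2 ≤ c * ∑ z ∈ Z, f z ^ 2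

lemma maximalAverageBound_card (d : G) (S : Finset G) : MaximalAverageBound d S (4 * S.card) := by
  intro N Z f _
  have single (x : G) :
      (∑ z ∈ Z, averageKernel d (N x) x z * f z) ^ 2 ≤ 4 * ∑ z ∈ Z, f z ^ 2 := by
    refine (Finset.sum_mul_sq_le_sq_mul_sq Z _ _).trans ?_
    gcongr
    calc ∑ z ∈ Z, averageKernel d (N x) x z ^ 2
        ≤ ∑ z ∈ Z, 2 * averageKernel d (N x) x z := by
          gcongr with z
          rw [pow_two]
          exact mul_le_mul_of_nonneg_right (averageKernel_le_two ..) (averageKernel_nonneg ..)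
      _ ≤ 2 * 2 := by rw [← Finset.mul_sum]; gcongr; exact sum_averageKernel_le_two ..
      _ = 4 := by norm_num
  refine (Finset.sum_le_card_nsmul _ _ _ fun x _ => single x).trans_eq ?_
  rw [nsmul_eq_mul]; ring

lemma sum_sq_sum_mul_averageKernel_le (d : G) (S Z : Finset G) (N : G → ℕ) {a : G → ℝ}
    (ha : ∀ x, 0 ≤ a x) :
    ∑ z ∈ Z, (∑ x ∈ S, a x * averageKernel d (N x) x z) ^ 2 ≤
      8 * ∑ x ∈ S, a x * ∑ x' ∈ S, averageKernel d (2 * N x) x x' * a x' := by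
  calc ∑ z ∈ Z, (∑ x ∈ S, a x * averageKernel d (N x) x z) ^ 2
      = ∑ x ∈ S, ∑ x' ∈ S, a x * a x' *
          ∑ z ∈ Z, averageKernel d (N x) x z * averageKernel d (N x') x' z := by
        simp only [pow_two, Finset.sum_mul_sum]
        simp only [Finset.mul_sum]
        rw [Finset.sum_comm]
        refine Finset.sum_congr rfl fun x _ => ?_
        rw [Finset.sum_comm]
        exact Finset.sum_congr rfl fun x' _ => Finset.sum_congr rfl fun z _ => by ring
    _ ≤ ∑ x ∈ S, ∑ x' ∈ S, a x * a x' *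
          (4 * (averageKernel d (2 * N x) x x' + averageKernel d (2 * N x') x' x)) := by
        gcongr with x _ x' _
        · exact mul_nonneg (ha x) (ha x')
        · exact sum_averageKernel_mul_le ..
    _ = 4 * ∑ x ∈ S, ∑ x' ∈ S, a x * (averageKernel d (2 * N x) x x' * a x') +
          4 * ∑ x ∈ S, ∑ x' ∈ S, a x' * (averageKernel d (2 * N x') x' x * a x) := by
        simp only [Finset.mul_sum, ← Finset.sum_add_distrib]
        exact Finset.sum_congr rfl fun x _ => Finset.sum_congr rfl fun x' _ => by ring
    _ = _ := by
        rw [Finset.sum_comm (f := fun x x' => a x' * (averageKernel d (2 * N x') x' x * a x))]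
        simp only [← Finset.mul_sum]
        ring

lemma MaximalAverageBound.improve {d : G} {S : Finset G} {c : ℝ} (hc : 0 ≤ c)
    (h : MaximalAverageBound d S c) : MaximalAverageBound d S (8 * √c) := by
  intro N Z f hf
  set a : G → ℝ := fun x => ∑ z ∈ Z, averageKernel d (N x) x z * f z
  have ha (x : G) : 0 ≤ a x :=
    Finset.sum_nonneg fun z _ => mul_nonneg (averageKernel_nonneg ..) (hf z)
  refine sum_sq_sum_mul_le_of_dual (by positivity) (fun _ => rfl) ?_
  calc _ ≤ 8 * ∑ x ∈ S, a x * ∑ x' ∈ S, averageKernel d (2 * N x) x x' * a x' :=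
        sum_sq_sum_mul_averageKernel_le d S Z N ha
    _ ≤ 8 * (√c * ∑ x ∈ S, a x ^ 2) := by
        gcongr
        exact sum_mul_le_sqrt_mul_sum_sq hc (h (fun x => 2 * N x) S a ha)
    _ = _ := by ring

/-- The best constant `c` satisfies `c ≤ 8 √c`. -/
lemma maximalAverageBound_eightyOne (d : G) (S : Finset G) : MaximalAverageBound d S 81 := by
  set T : Set ℝ := {c | 0 ≤ c ∧ MaximalAverageBound d S c}
  have nonempty : T.Nonempty := ⟨4 * S.card, by positivity, maximalAverageBound_card d S⟩
  have bddBelow : BddBelow T := ⟨0, fun c hc => hc.1⟩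
  have sInf_nonneg : 0 ≤ sInf T := le_csInf nonempty fun c hc => hc.1
  have sInf_sq_le (c : ℝ) (hc : c ∈ T) : sInf T ^ 2 / 64 ≤ c := by
    have : sInf T ≤ 8 * √c := csInf_le bddBelow ⟨by positivity, hc.2.improve hc.1⟩
    have : sInf T ^ 2 ≤ (8 * √c) ^ 2 := by gcongr
    rw [mul_pow, Real.sq_sqrt hc.1] at this
    linarith
  have sInf_lt : sInf T < 81 := by nlinarith [le_csInf nonempty sInf_sq_le]
  obtain ⟨c, hc, hc81⟩ := exists_lt_of_csInf_lt nonempty sInf_lt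
  exact fun N Z f hf => (hc.2 N Z f hf).trans (by gcongr)

open Classical in
lemma sum_range_div_le_sum_averageKernel_mul (d : G) (N : ℕ) {f : G → ℝ} (hf : ∀ z, 0 ≤ f z)
    (x : G) {Z : Finset G} (hZ : ∀ i < N, x - i • d ∈ Z) :
    (∑ i ∈ Finset.range N, f (x - i • d)) / N ≤ ∑ z ∈ Z, averageKernel d N x z * f z := by
  rw [sum_averageKernel_mul]
  gcongr
  calc ∑ i ∈ Finset.range N, f (x - i • d)
      = ∑ j ∈ (Finset.range N).image fun i : ℕ => (-i : ℤ),
          if x + j • d ∈ Z then f (x + j • d) else 0 := by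
        rw [Finset.sum_image fun i _ j _ => by simp]
        refine Finset.sum_congr rfl fun i hi => ?_
        rw [neg_smul, natCast_zsmul, ← sub_eq_add_neg, if_pos (hZ i (Finset.mem_range.1 hi))]
    _ ≤ _ := by
        refine Finset.sum_le_sum_of_subset_of_nonneg (fun j hj => ?_) fun j _ _ => ?_
        · simp only [Finset.mem_image, Finset.mem_range, Finset.mem_Ioo] at hj ⊢
          omega
        · split_ifs
          exacts [hf _, le_rfl]

lemma eLpNorm_iSup_average_le [MeasurableSpace G] [MeasurableSingletonClass G]
    {E : Type*} [SeminormedAddCommGroup E] {κ : Type*} [Nonempty κ] (d : G) (M : κ → ℕ)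
    (hM : ∀ n, M n ≠ 0) (g : G → E) :
    eLpNorm (fun x => ⨆ n, (∑ i ∈ Finset.range (M n), ‖g (x - i • d)‖ₑ) / M n) 2 count ≤
      9 * eLpNorm g 2 count := by
  classical
  refine eLpNorm_two_count_iSup_le fun ν S => ?_
  set Z : Finset G := S.biUnion fun x => (Finset.range (M (ν x))).image fun i => x - i • d
  have average_eq (x : G) :
      (∑ i ∈ Finset.range (M (ν x)), ‖g (x - i • d)‖ₑ) / M (ν x) =
        ENNReal.ofReal ((∑ i ∈ Finset.range (M (ν x)), ‖g (x - i • d)‖) / M (ν x)) := by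
    rw [ENNReal.ofReal_div_of_pos (by have := hM (ν x); positivity), ENNReal.ofReal_natCast,
      ENNReal.ofReal_sum_of_nonneg fun _ _ => norm_nonneg _]
    simp only [ofReal_norm]
  calc ∑ x ∈ S, ((∑ i ∈ Finset.range (M (ν x)), ‖g (x - i • d)‖ₑ) / M (ν x)) ^ 2
      = ENNReal.ofReal
          (∑ x ∈ S, ((∑ i ∈ Finset.range (M (ν x)), ‖g (x - i • d)‖) / M (ν x)) ^ 2) := by
        rw [ENNReal.ofReal_sum_of_nonneg fun _ _ => sq_nonneg _]
        exact Finset.sum_congr rfl fun x _ => by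
          rw [average_eq, ENNReal.ofReal_pow (by positivity)]
    _ ≤ ENNReal.ofReal (81 * ∑ z ∈ Z, ‖g z‖ ^ 2) := by
        refine ENNReal.ofReal_le_ofReal (le_trans (Finset.sum_le_sum fun x hx => ?_)
          (maximalAverageBound_eightyOne d S (M ∘ ν) Z _ fun z => norm_nonneg (g z)))
        gcongr
        exact sum_range_div_le_sum_averageKernel_mul d _ (fun z => norm_nonneg (g z)) x fun i hi =>
          Finset.mem_biUnion.2 ⟨x, hx, Finset.mem_image_of_mem _ (Finset.mem_range.2 hi)⟩
    _ = 9 ^ 2 * ∑ z ∈ Z, ‖g z‖ₑ ^ 2 := by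
        rw [ENNReal.ofReal_mul (by norm_num), ENNReal.ofReal_sum_of_nonneg fun _ _ => sq_nonneg _]
        simp only [ENNReal.ofReal_pow (norm_nonneg _), ofReal_norm]
        norm_num
    _ ≤ (9 * eLpNorm g 2 count) ^ 2 := by
        rw [mul_pow, eLpNorm_two_count_sq]
        gcongr
        exact ENNReal.sum_le_tsum _

end HardyLittlewood

/-! ### Averages at dyadic scales -/

section Mhat

@[fun_prop]
lemma continuous_Mhat (x : ℝ) : Continuous (Mhat x) := by unfold Mhat; fun_prop

lemma norm_Mhat_eq {x : ℝ} (hx : 0 < x) (θ : ℝ) :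
    ‖Mhat x θ‖ = 1 / x * ‖∑ n ∈ Finset.range ⌈x⌉₊, e2pi (-(n * θ))‖ := by
  rw [Mhat, norm_mul, Complex.norm_real, Real.norm_of_nonneg (by positivity)]

lemma natCeil_le_two_mul {x : ℝ} (hx : 1 ≤ x) : (⌈x⌉₊ : ℝ) ≤ 2 * x := by
  linarith [(Nat.ceil_lt_add_one (zero_le_one.trans hx)).le]

lemma norm_Mhat_le_two {x : ℝ} (hx : 1 ≤ x) (θ : ℝ) : ‖Mhat x θ‖ ≤ 2 := by
  have hx0 : 0 < x := by linarith
  rw [norm_Mhat_eq hx0, one_div_mul_eq_div, div_le_iff₀ hx0]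
  refine (norm_sum_le _ _).trans ?_
  simpa only [norm_e2pi, Finset.sum_const, Finset.card_range, nsmul_eq_mul, mul_one] using
    natCeil_le_two_mul hx

lemma enorm_Mhat_le_two {x : ℝ} (hx : 1 ≤ x) (θ : ℝ) : ‖Mhat x θ‖ₑ ≤ 2 := by
  rw [← ofReal_norm, ← ENNReal.ofReal_ofNat]
  exact ENNReal.ofReal_le_ofReal (norm_Mhat_le_two hx θ)

lemma memLp_Mhat_comp (x : ℝ) {f : ℝ → ℝ} (hf : Continuous f) :
    MemLp (fun ξ => Mhat x (f ξ)) ∞ circleMeasure :=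
  (memLp_finsetSum _ fun _ _ => memLp_e2pi_comp (by fun_prop)).const_mul _

lemma Mhat_sub_intCast (x θ : ℝ) (k : ℤ) : Mhat x (θ - k) = Mhat x θ := by
  unfold Mhat
  congr 1
  refine Finset.sum_congr rfl fun n _ => ?_
  rw [show -(n * (θ - k)) = -(n * θ) + ((n * k : ℤ) : ℝ) by push_cast; ring, e2pi_add,
    e2pi_intCast, mul_one]

lemma invFourier_Mhat_mul (x : ℝ) (D : ℤ) {G : ℝ → ℂ} (hG : MemLp G 2 circleMeasure) (z : ℤ) :
    invFourier ((fun ξ => Mhat x (D * ξ)) * G) z =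
      ((1 / x : ℝ) : ℂ) * ∑ n ∈ Finset.range ⌈x⌉₊, invFourier G (z - n • D) := by
  have expand : (fun ξ => Mhat x (D * ξ)) * G = ((1 / x : ℝ) : ℂ) •
      ∑ n ∈ Finset.range ⌈x⌉₊, fun ξ => e2pi (-((n • D : ℤ) * ξ)) * G ξ := by
    ext ξ
    simp [Mhat, Finset.sum_mul, mul_assoc]
  have memLp (n : ℕ) : MemLp (fun ξ => e2pi (-((n • D : ℤ) * ξ)) * G ξ) 2 circleMeasure :=
    hG.mul' (memLp_e2pi_comp (f := fun ξ => -((n • D : ℤ) * ξ)) (by fun_prop))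
  rw [expand, invFourier_const_smul, invFourier_sum fun n _ => memLp n]
  simp only [invFourier_e2pi_mul]

lemma eLpNorm_iSup_invFourier_Mhat_le {κ : Type*} [Nonempty κ] (D : ℤ) {X : κ → ℝ}
    (hX : ∀ n, 1 ≤ X n) {G : ℝ → ℂ} (hG : MemLp G 2 circleMeasure) :
    eLpNorm (fun z => ⨆ n, ‖invFourier ((fun ξ => Mhat (X n) (D * ξ)) * G) z‖ₑ) 2 count ≤
      18 * eLpNorm (invFourier G) 2 count := by
  have enorm_two : ‖(2 : ℂ)‖ₑ = 2 := by rw [← ofReal_norm, RCLike.norm_ofNat, ENNReal.ofReal_ofNat]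
  have average (n : κ) (z : ℤ) : ‖invFourier ((fun ξ => Mhat (X n) (D * ξ)) * G) z‖ₑ ≤
      (∑ i ∈ Finset.range ⌈X n⌉₊, ‖((2 : ℂ) • invFourier G) (z - i • D)‖ₑ) / ⌈X n⌉₊ := by
    have hX0 : 0 < X n := by linarith [hX n]
    have hceil : (0 : ℝ) < ⌈X n⌉₊ := by exact_mod_cast Nat.ceil_pos.2 hX0
    have inv_le : ‖((1 / X n : ℝ) : ℂ)‖ₑ ≤ 2 / ⌈X n⌉₊ := by
      rw [← ofReal_norm, Complex.norm_real, Real.norm_of_nonneg (by positivity),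
        ← ENNReal.ofReal_ofNat, ← ENNReal.ofReal_natCast, ← ENNReal.ofReal_div_of_pos hceil]
      refine ENNReal.ofReal_le_ofReal ?_
      rw [div_le_div_iff₀ hX0 hceil, one_mul]
      exact natCeil_le_two_mul (hX n)
    calc _ ≤ 2 / ⌈X n⌉₊ * ∑ i ∈ Finset.range ⌈X n⌉₊, ‖invFourier G (z - i • D)‖ₑ := by
          rw [invFourier_Mhat_mul _ _ hG, enorm_mul]
          gcongr
          exact enorm_sum_le _ _
      _ = _ := by
          simp only [Pi.smul_apply, enorm_smul, ← Finset.mul_sum, enorm_two]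
          rw [ENNReal.mul_div_right_comm]
  calc _ ≤ 9 * eLpNorm ((2 : ℂ) • invFourier G) 2 count :=
        (eLpNorm_mono_enorm fun z => iSup_mono fun n => average n z).trans <|
          eLpNorm_iSup_average_le D _ (fun n => (Nat.ceil_pos.2 (by linarith [hX n])).ne') _
    _ = _ := by
        rw [eLpNorm_const_smul, ← mul_assoc, enorm_two]
        norm_num

lemma norm_e2pi_sub_one (t : ℝ) : ‖e2pi t - 1‖ = 2 * |Real.sin (Real.pi * t)| := by
  have h := Complex.norm_exp_I_mul_ofReal_sub_one (2 * Real.pi * t)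
  rw [norm_mul, Real.norm_two, Real.norm_eq_abs, mul_assoc, mul_div_cancel_left₀ _ two_ne_zero] at h
  rw [← h, e2pi]
  congr 3
  push_cast
  ring

lemma norm_e2pi_sub_one_le (t : ℝ) : ‖e2pi t - 1‖ ≤ 2 * Real.pi * |t| := by
  have sin_le : |Real.sin (Real.pi * t)| ≤ Real.pi * |t| := by
    simpa only [abs_mul, abs_of_pos Real.pi_pos] using Real.abs_sin_le_abs (x := Real.pi * t)
  rw [norm_e2pi_sub_one]
  linarith

lemma four_mul_abs_le_norm_e2pi_sub_one {t : ℝ} (ht : |t| ≤ 1 / 2) :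
    4 * |t| ≤ ‖e2pi t - 1‖ := by
  have jordan := Real.mul_abs_le_abs_sin (x := Real.pi * t) (by
    rw [abs_mul, abs_of_pos Real.pi_pos]; nlinarith [Real.pi_pos])
  rw [abs_mul, abs_of_pos Real.pi_pos, ← mul_assoc, div_mul_cancel₀ _ Real.pi_ne_zero] at jordan
  rw [norm_e2pi_sub_one]
  linarith

lemma e2pi_natCast_mul (n : ℕ) (t : ℝ) : e2pi (n * t) = e2pi t ^ n := by
  unfold e2pi
  rw [← Complex.exp_nat_mul]
  congr 1
  push_cast
  ring

lemma norm_sum_e2pi_mul_le (M : ℕ) {θ : ℝ} (hθ : |θ| ≤ 1 / 2) :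
    ‖∑ n ∈ Finset.range M, e2pi (-(n * θ))‖ * (4 * |θ|) ≤ 2 := by
  calc _ ≤ ‖∑ n ∈ Finset.range M, e2pi (-θ) ^ n‖ * ‖e2pi (-θ) - 1‖ := by
        simp only [← mul_neg, e2pi_natCast_mul]
        gcongr
        rw [← abs_neg]
        exact four_mul_abs_le_norm_e2pi_sub_one (by rwa [abs_neg])
    _ = ‖e2pi (-θ) ^ M - 1‖ := by rw [← norm_mul, geom_sum_mul]
    _ ≤ ‖e2pi (-θ) ^ M‖ + ‖(1 : ℂ)‖ := norm_sub_le _ _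
    _ = 2 := by rw [norm_pow, norm_e2pi]; norm_num

lemma norm_Mhat_mul_le {x θ : ℝ} (hx : 0 < x) (hθ : |θ| ≤ 1 / 2) :
    ‖Mhat x θ‖ * (x * |θ|) ≤ 1 / 2 := by
  rw [norm_Mhat_eq hx, mul_mul_mul_comm, one_div_mul_cancel hx.ne', one_mul]
  linarith [norm_sum_e2pi_mul_le ⌈x⌉₊ hθ]

lemma norm_Mhat_sub_one_le {x : ℝ} (hx : 1 ≤ x) (θ : ℝ) :
    ‖Mhat x θ - 1‖ ≤ 26 * (x * |θ|) + 1 / x := by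
  have hx0 : 0 < x := by linarith
  have ceil_le := natCeil_le_two_mul hx
  have decomposition : Mhat x θ - 1 =
      ((1 / x : ℝ) : ℂ) * (∑ n ∈ Finset.range ⌈x⌉₊, (e2pi (-(n * θ)) - 1)) +
        ((1 / x * (⌈x⌉₊ - x) : ℝ) : ℂ) := by
    have : (x : ℂ) ≠ 0 := by exact_mod_cast hx0.ne'
    rw [Mhat, Finset.sum_sub_distrib, Finset.sum_const, Finset.card_range, nsmul_eq_mul]
    generalize ∑ n ∈ Finset.range ⌈x⌉₊, e2pi (-(n * θ)) = S
    push_cast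
    field_simp
    ring
  have term_le (n : ℕ) (hn : n ∈ Finset.range ⌈x⌉₊) :
      ‖e2pi (-(n * θ)) - 1‖ ≤ 2 * Real.pi * (2 * x * |θ|) := by
    refine (norm_e2pi_sub_one_le _).trans ?_
    rw [abs_neg, abs_mul, Nat.abs_cast]
    have : (n : ℝ) ≤ ⌈x⌉₊ := by exact_mod_cast (Finset.mem_range.1 hn).le
    gcongr
    exact this.trans ceil_le
  have oscillation : ‖∑ n ∈ Finset.range ⌈x⌉₊, (e2pi (-(n * θ)) - 1)‖ ≤
      2 * x * (2 * Real.pi * (2 * x * |θ|)) := by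
    refine (norm_sum_le_of_le _ term_le).trans ?_
    rw [Finset.sum_const, Finset.card_range, nsmul_eq_mul]
    gcongr
  have rounding : ‖((1 / x * (⌈x⌉₊ - x) : ℝ) : ℂ)‖ ≤ 1 / x := by
    rw [Complex.norm_real,
      Real.norm_of_nonneg (mul_nonneg (by positivity) (sub_nonneg.2 (Nat.le_ceil x)))]
    exact mul_le_of_le_one_right (by positivity) (by linarith [Nat.ceil_lt_add_one hx0.le])
  rw [decomposition]
  refine (norm_add_le _ _).trans (add_le_add ?_ rounding)
  rw [norm_mul, Complex.norm_real, Real.norm_of_nonneg (by positivity)]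
  calc _ ≤ 1 / x * (2 * x * (2 * Real.pi * (2 * x * |θ|))) := by gcongr
    _ = 8 * Real.pi * (x * |θ|) := by field_simp; ring
    _ ≤ 26 * (x * |θ|) := by gcongr; linarith [Real.pi_lt_d2]

/-- The indicator of `u ≤ 1`: the model for `M̂_x(θ)` in terms of `u = x |θ|`. -/
def lowIndicator (u : ℝ) : ℝ := if u ≤ 1 then 1 else 0

lemma antitone_lowIndicator : Antitone lowIndicator := fun u v huv => by
  unfold lowIndicator
  split_ifs with hv hu
  exacts [le_rfl, absurd (huv.trans hv) hu, zero_le_one, le_rfl]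

lemma norm_Mhat_sub_lowIndicator_le {x θ : ℝ} (hx : 1 ≤ x) (hθ : |θ| ≤ 1 / 2) :
    ‖Mhat x θ - lowIndicator (x * |θ|)‖ ≤ 26 * min (x * |θ|) (x * |θ|)⁻¹ + 1 / x := by
  have hx0 : 0 < x := by linarith
  have hu0 : 0 ≤ x * |θ| := by positivity
  unfold lowIndicator
  split_ifs with hu
  · have le_inv : x * |θ| ≤ (x * |θ|)⁻¹ := by
      rcases hu0.eq_or_lt with h | h
      · rw [← h, inv_zero]
      · exact hu.trans (one_le_inv₀ h |>.2 hu)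
    rw [min_eq_left le_inv, Complex.ofReal_one]
    exact norm_Mhat_sub_one_le hx θ
  · have hu1 : 1 < x * |θ| := not_le.1 hu
    rw [min_eq_right ((inv_le_one_of_one_le₀ hu1.le).trans hu1.le), Complex.ofReal_zero, sub_zero]
    calc ‖Mhat x θ‖ ≤ 1 / 2 * (x * |θ|)⁻¹ := by
          rw [← div_eq_mul_inv, le_div_iff₀ (by linarith)]
          exact norm_Mhat_mul_le hx0 hθ
      _ ≤ 26 * (x * |θ|)⁻¹ := by gcongr; norm_num
      _ ≤ _ := le_add_of_nonneg_right (by positivity)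

/-- `u ↦ 6 u / (1 + u)` is a bounded potential for `min u u⁻¹` under doubling. -/
lemma min_inv_le_sub_of_double {u : ℝ} (hu : 0 ≤ u) :
    min u u⁻¹ ≤ 6 * (2 * u / (1 + 2 * u) - u / (1 + u)) := by
  have increment : 2 * u / (1 + 2 * u) - u / (1 + u) = u / ((1 + 2 * u) * (1 + u)) := by
    field_simp; ring
  rw [increment, mul_div_assoc', le_div_iff₀ (by positivity)]
  rcases le_total u 1 with h | h
  · calc _ ≤ u * (3 * 2) := by gcongr; exacts [min_le_left _ _, by linarith, by linarith]
      _ = _ := by ring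
  · have : 0 < u := by linarith
    calc _ ≤ u⁻¹ * ((3 * u) * (2 * u)) := by
          gcongr; exacts [min_le_right _ _, by linarith, by linarith]
      _ = _ := by field_simp; norm_num

lemma sum_min_two_pow_mul_inv_le {u : ℝ} (hu : 0 ≤ u) (L : ℕ) :
    ∑ n ∈ Finset.range L, min (2 ^ n * u) (2 ^ n * u)⁻¹ ≤ 6 := by
  set g : ℕ → ℝ := fun n => 2 ^ n * u / (1 + 2 ^ n * u)
  have g_nonneg : 0 ≤ g 0 := by positivity
  have g_le_one : g L ≤ 1 := div_le_one_of_le₀ (by linarith) (by positivity)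
  calc _ ≤ ∑ n ∈ Finset.range L, 6 * (g (n + 1) - g n) := by
        gcongr with n
        simpa only [g, pow_succ', mul_assoc] using min_inv_le_sub_of_double (u := 2 ^ n * u)
          (by positivity)
    _ = 6 * (g L - g 0) := by rw [← Finset.mul_sum, Finset.sum_range_sub]
    _ ≤ 6 := by linarith

lemma tsum_enorm_le_of_sum_range_le {E : Type*} [SeminormedAddGroup E] {v : ℕ → E} {B : ℝ}
    (h : ∀ L, ∑ n ∈ Finset.range L, ‖v n‖ ≤ B) : ∑' n, ‖v n‖ₑ ≤ ENNReal.ofReal B := by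
  rw [ENNReal.tsum_eq_iSup_nat]
  refine iSup_le fun L => ?_
  simp only [← ofReal_norm]
  rw [← ENNReal.ofReal_sum_of_nonneg fun n _ => norm_nonneg _]
  exact ENNReal.ofReal_le_ofReal (h L)

variable {x θ x' θ' : ℝ}

lemma tsum_enorm_Mhat_sub_lowIndicator_le (hx : 1 ≤ x) (hθ : |θ| ≤ 1 / 2) :
    ∑' n : ℕ, ‖Mhat (2 ^ n * x) θ - lowIndicator (2 ^ n * (x * |θ|))‖ₑ ≤ 158 := by
  rw [← ENNReal.ofReal_ofNat]
  refine tsum_enorm_le_of_sum_range_le fun L => ?_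
  calc _ ≤ ∑ n ∈ Finset.range L,
        (26 * min (2 ^ n * (x * |θ|)) (2 ^ n * (x * |θ|))⁻¹ + (1 / 2) ^ n) := by
        gcongr with n
        have h2 : (1 : ℝ) ≤ 2 ^ n := one_le_pow₀ one_le_two
        rw [← mul_assoc]
        refine (norm_Mhat_sub_lowIndicator_le (one_le_mul_of_one_le_of_one_le h2 hx) hθ).trans ?_
        rw [div_pow, one_pow]
        gcongr
        exact le_mul_of_one_le_right (by positivity) hx
    _ ≤ 26 * 6 + 2 := by
        rw [Finset.sum_add_distrib, ← Finset.mul_sum]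
        gcongr
        exacts [sum_min_two_pow_mul_inv_le (by positivity) L, sum_geometric_two_le L]
    _ = 158 := by norm_num

lemma tsum_enorm_lowIndicator_sub_le {u : ℕ → ℝ} (hu : Monotone u) :
    ∑' n, ‖lowIndicator (u (n + 1)) - lowIndicator (u n)‖ₑ ≤ 1 := by
  have mem_Icc (v : ℝ) : lowIndicator v ∈ Set.Icc 0 1 := by
    unfold lowIndicator; split_ifs <;> simp
  rw [← ENNReal.ofReal_one]
  refine tsum_enorm_le_of_sum_range_le fun L => ?_
  calc _ = ∑ n ∈ Finset.range L, (lowIndicator (u n) - lowIndicator (u (n + 1))) := by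
        refine Finset.sum_congr rfl fun n _ => ?_
        rw [norm_sub_rev]
        exact Real.norm_of_nonneg (sub_nonneg.2 (antitone_lowIndicator (hu n.le_succ)))
    _ = lowIndicator (u 0) - lowIndicator (u L) := Finset.sum_range_sub' _ _
    _ ≤ 1 := by linarith [(mem_Icc (u 0)).2, (mem_Icc (u L)).1]

lemma tsum_enorm_Mhat_succ_sub_le (hx : 1 ≤ x) (hθ : |θ| ≤ 1 / 2) :
    ∑' n : ℕ, ‖Mhat (2 ^ (n + 1) * x) θ - Mhat (2 ^ n * x) θ‖ₑ ≤ 317 := by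
  set I : ℕ → ℝ := fun n => lowIndicator (2 ^ n * (x * |θ|))
  set e : ℕ → ℝ≥0∞ := fun n => ‖Mhat (2 ^ n * x) θ - I n‖ₑ
  have triangle (n : ℕ) : ‖Mhat (2 ^ (n + 1) * x) θ - Mhat (2 ^ n * x) θ‖ₑ ≤
      e (n + 1) + ‖I (n + 1) - I n‖ₑ + e n := by
    have split : Mhat (2 ^ (n + 1) * x) θ - Mhat (2 ^ n * x) θ =
        (Mhat (2 ^ (n + 1) * x) θ - I (n + 1)) + ((I (n + 1) - I n : ℝ) : ℂ)
          - (Mhat (2 ^ n * x) θ - I n) := by push_cast; ring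
    rw [split]
    refine (enorm_sub_le ..).trans ?_
    gcongr
    refine (enorm_add_le ..).trans_eq ?_
    rw [← ofReal_norm ((I (n + 1) - I n : ℝ) : ℂ), Complex.norm_real, ofReal_norm]
  have error_le : ∑' n, e n ≤ 158 := tsum_enorm_Mhat_sub_lowIndicator_le hx hθ
  have monotone : Monotone fun n : ℕ => 2 ^ n * (x * |θ|) := fun m n hmn => by
    dsimp only; gcongr; exact one_le_two
  calc _ ≤ ∑' n, (e (n + 1) + ‖I (n + 1) - I n‖ₑ + e n) := ENNReal.tsum_le_tsum triangle
    _ = ∑' n, e (n + 1) + ∑' n, ‖I (n + 1) - I n‖ₑ + ∑' n, e n := by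
        rw [ENNReal.tsum_add, ENNReal.tsum_add]
    _ ≤ 158 + 1 + 158 := by
        gcongr
        · exact (ENNReal.tsum_comp_le_tsum_of_injective (add_left_injective 1) e).trans error_le
        · exact tsum_enorm_lowIndicator_sub_le monotone
    _ = 317 := by norm_num

lemma tsum_enorm_Mhat_sub_Mhat_le (hx : 1 ≤ x) (hθ : |θ| ≤ 1 / 2) (hx' : 1 ≤ x')
    (hθ' : |θ'| ≤ 1 / 2) (h : x * |θ| = x' * |θ'|) :
    ∑' n : ℕ, ‖Mhat (2 ^ n * x) θ - Mhat (2 ^ n * x') θ'‖ₑ ≤ 316 := by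
  calc _ ≤ ∑' n : ℕ, (‖Mhat (2 ^ n * x) θ - lowIndicator (2 ^ n * (x * |θ|))‖ₑ +
        ‖Mhat (2 ^ n * x') θ' - lowIndicator (2 ^ n * (x' * |θ'|))‖ₑ) := by
        refine ENNReal.tsum_le_tsum fun n => ?_
        rw [← sub_sub_sub_cancel_right _ _ (lowIndicator (2 ^ n * (x * |θ|)) : ℂ), ← h]
        exact enorm_sub_le ..
    _ ≤ 158 + 158 := by
        rw [ENNReal.tsum_add]
        gcongr
        exacts [tsum_enorm_Mhat_sub_lowIndicator_le hx hθ,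
          tsum_enorm_Mhat_sub_lowIndicator_le hx' hθ']
    _ = 316 := by norm_num

lemma tsum_enorm_Mhat_le (hx : 1 ≤ x) (hθ : |θ| ≤ 1 / 2) (h : 1 < x * |θ|) :
    ∑' n : ℕ, ‖Mhat (2 ^ n * x) θ‖ₑ ≤ 158 := by
  have lowIndicator_eq (n : ℕ) : lowIndicator (2 ^ n * (x * |θ|)) = 0 :=
    if_neg (not_le.2 (one_lt_mul_of_le_of_lt (one_le_pow₀ one_le_two) h))
  simpa only [lowIndicator_eq, Complex.ofReal_zero, sub_zero] using
    tsum_enorm_Mhat_sub_lowIndicator_le hx hθ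

end Mhat

/-! ### Finitely many frequencies -/

section Multifrequency

/-- Split the maximal function at scale `2 ^ s`: Rademacher–Menshov controls the first scales, and
beyond them `m` is compared with averages along the multiples of `D`. -/
lemma eLpNorm_iSup_invFourier_le_of_comparison {m : ℕ → ℝ → ℂ} {g H : ℝ → ℂ} {B : ℝ≥0∞}
    {X : ℕ → ℝ} (D : ℤ) (s : ℕ) (hH : MemLp H 2 circleMeasure)
    (hm : ∀ n, MemLp (m n) ∞ circleMeasure) (hg : MemLp g ∞ circleMeasure) (hX : ∀ k, 1 ≤ X k)
    (h0 : ∀ ξ, ‖m 0 ξ‖ₑ ≤ B) (hvar : ∀ ξ, ∑' n, ‖m (n + 1) ξ - m n ξ‖ₑ ≤ B)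
    (hgB : ∀ ξ, ‖g ξ‖ₑ ≤ B)
    (hcomp : ∀ ξ, ∑' k, ‖m (2 ^ s + k) ξ - Mhat (X k) (D * ξ) * g ξ‖ₑ ≤ B) :
    eLpNorm (fun x => ⨆ n, ‖invFourier (m n * H) x‖ₑ) 2 count ≤
      (s + 20) * (B * eLpNorm H 2 circleMeasure) := by
  set A : ℕ → ℝ → ℂ := fun k => (fun ξ => Mhat (X k) (D * ξ)) * g
  have hA (k : ℕ) : MemLp (A k) ∞ circleMeasure := hg.mul (memLp_Mhat_comp _ (by fun_prop))
  set first : ℤ → ℝ≥0∞ := fun x => ⨆ n, ⨆ (_ : n < 2 ^ s), ‖invFourier (m n * H) x‖ₑ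
  set error : ℤ → ℝ≥0∞ := fun x => ⨆ k, ‖invFourier ((m (2 ^ s + k) - A k) * H) x‖ₑ
  set average : ℤ → ℝ≥0∞ := fun x => ⨆ k, ‖invFourier (A k * H) x‖ₑ
  have pointwise (x : ℤ) : ⨆ n, ‖invFourier (m n * H) x‖ₑ ≤ (first + (error + average)) x := by
    refine iSup_le fun n => ?_
    rcases lt_or_ge n (2 ^ s) with hn | hn
    · exact le_add_right (le_iSup₂_of_le n hn le_rfl)
    · obtain ⟨k, rfl⟩ := Nat.exists_eq_add_of_le hn
      have split : invFourier (m (2 ^ s + k) * H) x =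
          invFourier ((m (2 ^ s + k) - A k) * H) x + invFourier (A k * H) x := by
        rw [sub_mul, invFourier_sub (hH.mul (hm _)) (hH.mul (hA k)), sub_add_cancel]
      rw [split]
      refine (enorm_add_le _ _).trans (le_add_left (add_le_add ?_ ?_))
      · exact le_iSup (fun k => ‖invFourier ((m (2 ^ s + k) - A k) * H) x‖ₑ) k
      · exact le_iSup (fun k => ‖invFourier (A k * H) x‖ₑ) k
  have average_le : eLpNorm average 2 count ≤ 18 * (B * eLpNorm H 2 circleMeasure) := by
    simp only [average, A, mul_assoc]
    refine (eLpNorm_iSup_invFourier_Mhat_le D hX (hH.mul hg)).trans ?_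
    gcongr
    exact eLpNorm_invFourier_mul_le hH hg hgB
  have measurable (f : ℤ → ℝ≥0∞) : AEStronglyMeasurable f count :=
    (measurable_of_countable f).aestronglyMeasurable
  calc _ ≤ eLpNorm (first + (error + average)) 2 count := eLpNorm_mono_enorm pointwise
    _ ≤ eLpNorm first 2 count + (eLpNorm error 2 count + eLpNorm average 2 count) := by
        refine (eLpNorm_add_le (measurable _) (measurable _) one_le_two).trans ?_
        gcongr
        exact eLpNorm_add_le (measurable _) (measurable _) one_le_two
    _ ≤ (s + 1) * (B * eLpNorm H 2 circleMeasure) + (B * eLpNorm H 2 circleMeasure +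
          18 * (B * eLpNorm H 2 circleMeasure)) := by
        gcongr
        · exact eLpNorm_iSup_lt_two_pow_invFourier_le hH hm h0 hvar s
        · exact eLpNorm_iSup_invFourier_le hH (fun k => (hm _).sub (hA k)) hcomp
    _ = _ := by ring

lemma tsum_enorm_Mhat_div_sub_ite_le {N ℓ D β : ℝ} (hℓ : 0 < ℓ) (hℓN : ℓ ≤ N)
    (hβ : ℓ * |β| ≤ 1 / 4) (hD : 0 < D) (hDN : 4 * D ≤ N) :
    ∑' k : ℕ, ‖Mhat (2 ^ k * (N / ℓ)) (ℓ * β) -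
      if |β| ≤ 1 / (4 * D) then Mhat (2 ^ k * (N / D)) (D * β) else 0‖ₑ ≤ 316 := by
  have abs_ℓβ : |ℓ * β| = ℓ * |β| := by rw [abs_mul, abs_of_pos hℓ]
  have abs_Dβ : |D * β| = D * |β| := by rw [abs_mul, abs_of_pos hD]
  have one_le_ℓ : 1 ≤ N / ℓ := (one_le_div hℓ).2 hℓN
  split_ifs with hβD
  · rw [le_div_iff₀ (by positivity)] at hβD
    refine tsum_enorm_Mhat_sub_Mhat_le one_le_ℓ ?_ ((one_le_div hD).2 ?_) ?_ ?_
    · linarith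
    · linarith
    · linarith
    · rw [abs_ℓβ, abs_Dβ]
      field_simp
  · rw [not_le, div_lt_iff₀ (by positivity)] at hβD
    simp only [sub_zero]
    refine (tsum_enorm_Mhat_le one_le_ℓ (by linarith) ?_).trans (by norm_num)
    calc 1 < |β| * (4 * D) := hβD
      _ ≤ |β| * N := by gcongr
      _ = _ := by rw [abs_ℓβ]; field_simp

variable {ι : Type*} {S : Finset ι}

lemma sum_enorm_mul_le_of_subsingleton_support {κ : ι → ℂ} {c : ι → ℝ≥0∞} {δ B : ℝ≥0∞}
    (hκ : ∀ i ∈ S, ∀ j ∈ S, κ i ≠ 0 → κ j ≠ 0 → i = j)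
    (hδ : ∀ i ∈ S, ‖κ i‖ₑ ≤ δ) (hc : ∀ i ∈ S, κ i ≠ 0 → c i ≤ B) :
    ∑ i ∈ S, ‖κ i‖ₑ * c i ≤ δ * B := by
  by_cases h : ∃ i ∈ S, κ i ≠ 0
  · obtain ⟨i, hi, hκi⟩ := h
    have eq_zero : ∀ j ∈ S, j ≠ i → κ j = 0 := fun j hj hji =>
      by_contra fun hκj => hji (hκ j hj i hi hκj hκi)
    rw [Finset.sum_eq_single_of_mem i hi fun j hj hji => by simp [eq_zero j hj hji]]
    exact mul_le_mul' (hδ i hi) (hc i hi hκi)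
  · push Not at h
    rw [Finset.sum_eq_zero fun i hi => by simp [h i hi]]
    exact zero_le

lemma enorm_sum_mul_le_of_subsingleton_support {κ f : ι → ℂ} {δ B : ℝ≥0∞}
    (hκ : ∀ i ∈ S, ∀ j ∈ S, κ i ≠ 0 → κ j ≠ 0 → i = j)
    (hδ : ∀ i ∈ S, ‖κ i‖ₑ ≤ δ) (hf : ∀ i ∈ S, κ i ≠ 0 → ‖f i‖ₑ ≤ B) :
    ‖∑ i ∈ S, κ i * f i‖ₑ ≤ δ * B := by
  refine (enorm_sum_le _ _).trans ?_
  simp only [enorm_mul]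
  exact sum_enorm_mul_le_of_subsingleton_support hκ hδ hf

lemma tsum_enorm_sum_mul_le_of_subsingleton_support {κ : ι → ℂ} {f : ℕ → ι → ℂ} {δ B : ℝ≥0∞}
    (hκ : ∀ i ∈ S, ∀ j ∈ S, κ i ≠ 0 → κ j ≠ 0 → i = j)
    (hδ : ∀ i ∈ S, ‖κ i‖ₑ ≤ δ) (hf : ∀ i ∈ S, κ i ≠ 0 → ∑' n, ‖f n i‖ₑ ≤ B) :
    ∑' n, ‖∑ i ∈ S, κ i * f n i‖ₑ ≤ δ * B := by
  calc _ ≤ ∑' n, ∑ i ∈ S, ‖κ i‖ₑ * ‖f n i‖ₑ := by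
        refine ENNReal.tsum_le_tsum fun n => (enorm_sum_le _ _).trans_eq ?_
        simp only [enorm_mul]
    _ = ∑ i ∈ S, ‖κ i‖ₑ * ∑' n, ‖f n i‖ₑ := by
        rw [Summable.tsum_finsetSum fun _ _ => ENNReal.summable]
        simp only [ENNReal.tsum_mul_left]
    _ ≤ δ * B := sum_enorm_mul_le_of_subsingleton_support hκ hδ hf

lemma tsum_enorm_sum_mul_Mhat_sub_le {κ : ι → ℂ} {α ℓ : ι → ℝ} {N ξ : ℝ} {δ : ℝ≥0∞} {D : ℤ}
    (s : ℕ) (hκ : ∀ i ∈ S, ∀ j ∈ S, κ i ≠ 0 → κ j ≠ 0 → i = j) (hδ : ∀ i ∈ S, ‖κ i‖ₑ ≤ δ)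
    (hℓ : ∀ i ∈ S, 0 < ℓ i) (hℓN : ∀ i ∈ S, ℓ i ≤ N)
    (hsupp : ∀ i ∈ S, κ i ≠ 0 → ℓ i * |ξ - α i| ≤ 1 / 4)
    (hD : 0 < D) (hDN : 4 * D ≤ 2 ^ 2 ^ s * N) (hDα : ∀ i ∈ S, ∃ k : ℤ, D * α i = k) :
    ∑' k, ‖(∑ i ∈ S, κ i * Mhat (2 ^ (2 ^ s + k) * (N / ℓ i)) (ℓ i * (ξ - α i))) -
      Mhat (2 ^ k * (2 ^ 2 ^ s * N / D)) (D * ξ) *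
        ∑ i ∈ S, κ i * if |ξ - α i| ≤ 1 / (4 * D) then 1 else 0‖ₑ ≤ δ * 317 := by
  have Mhat_sub (x : ℝ) : ∀ i ∈ S, Mhat x (D * ξ) = Mhat x (D * (ξ - α i)) := fun i hi => by
    obtain ⟨k, hk⟩ := hDα i hi
    rw [mul_sub, hk, Mhat_sub_intCast]
  have summand (k : ℕ) : (∑ i ∈ S, κ i * Mhat (2 ^ (2 ^ s + k) * (N / ℓ i)) (ℓ i * (ξ - α i))) -
      Mhat (2 ^ k * (2 ^ 2 ^ s * N / D)) (D * ξ) *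
        ∑ i ∈ S, κ i * (if |ξ - α i| ≤ 1 / (4 * D) then 1 else 0) =
      ∑ i ∈ S, κ i * (Mhat (2 ^ k * (2 ^ 2 ^ s * N / ℓ i)) (ℓ i * (ξ - α i)) -
        if |ξ - α i| ≤ 1 / (4 * D) then
          Mhat (2 ^ k * (2 ^ 2 ^ s * N / D)) (D * (ξ - α i)) else 0) := by
    rw [Finset.mul_sum, ← Finset.sum_sub_distrib]
    refine Finset.sum_congr rfl fun i hi => ?_
    have scale_eq : 2 ^ (2 ^ s + k) * (N / ℓ i) = 2 ^ k * (2 ^ 2 ^ s * N / ℓ i) := by ring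
    rw [Mhat_sub _ i hi, scale_eq, mul_sub (κ i), mul_left_comm, mul_ite, mul_one, mul_zero]
  simp only [summand]
  refine tsum_enorm_sum_mul_le_of_subsingleton_support hκ hδ fun i hi hκi =>
    (tsum_enorm_Mhat_div_sub_ite_le (hℓ i hi) ?_ (hsupp i hi hκi) (by exact_mod_cast hD)
      hDN).trans (by norm_num)
  exact (hℓN i hi).trans (le_mul_of_one_le_left ((hℓ i hi).le.trans (hℓN i hi))
    (one_le_pow₀ one_le_two))

lemma eLpNorm_iSup_invFourier_multifrequency_le {κ : ι → ℝ → ℂ} {α ℓ : ι → ℝ} {H : ℝ → ℂ}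
    {N : ℝ} {δ : ℝ≥0∞} {D : ℤ} (s : ℕ) (hH : MemLp H 2 circleMeasure)
    (hκ : ∀ i ∈ S, MemLp (κ i) ∞ circleMeasure) (hδ : ∀ i ∈ S, ∀ ξ, ‖κ i ξ‖ₑ ≤ δ)
    (hdisj : ∀ ξ, ∀ i ∈ S, ∀ j ∈ S, κ i ξ ≠ 0 → κ j ξ ≠ 0 → i = j)
    (hℓ : ∀ i ∈ S, 0 < ℓ i) (hℓN : ∀ i ∈ S, ℓ i ≤ N)
    (hsupp : ∀ i ∈ S, ∀ ξ, κ i ξ ≠ 0 → ℓ i * |ξ - α i| ≤ 1 / 4)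
    (hD : 0 < D) (hDN : 4 * D ≤ 2 ^ 2 ^ s * N) (hDα : ∀ i ∈ S, ∃ k : ℤ, D * α i = k) :
    eLpNorm (fun x => ⨆ n : ℕ, ‖invFourier ((fun ξ => ∑ i ∈ S,
      κ i ξ * Mhat (2 ^ n * (N / ℓ i)) (ℓ i * (ξ - α i))) * H) x‖ₑ) 2 count ≤
      (s + 20) * (δ * 317 * eLpNorm H 2 circleMeasure) := by
  have hD' : (0 : ℝ) < D := by exact_mod_cast hD
  have one_le_div : ∀ i ∈ S, 1 ≤ N / ℓ i := fun i hi => (one_le_div (hℓ i hi)).2 (hℓN i hi)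
  have one_le (n : ℕ) : ∀ i ∈ S, 1 ≤ 2 ^ n * (N / ℓ i) := fun i hi =>
    one_le_mul_of_one_le_of_one_le (one_le_pow₀ one_le_two) (one_le_div i hi)
  have abs_le : ∀ i ∈ S, ∀ ξ, κ i ξ ≠ 0 → |ℓ i * (ξ - α i)| ≤ 1 / 2 := fun i hi ξ hξ => by
    rw [abs_mul, abs_of_pos (hℓ i hi)]
    linarith [hsupp i hi ξ hξ]
  set g : ℝ → ℂ := ∑ i ∈ S, {ξ | |ξ - α i| ≤ 1 / (4 * D)}.indicator (κ i) with hg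
  have g_apply (ξ : ℝ) : g ξ = ∑ i ∈ S, κ i ξ * if |ξ - α i| ≤ 1 / (4 * D) then 1 else 0 := by
    simp only [hg, Finset.sum_apply, Set.indicator_apply, Set.mem_ofPred_eq, mul_ite, mul_one,
      mul_zero]
  refine eLpNorm_iSup_invFourier_le_of_comparison (g := g)
    (X := fun k => 2 ^ k * (2 ^ 2 ^ s * N / D)) D s hH (fun n => ?_) ?_ (fun k => ?_)
    (fun ξ => ?_) (fun ξ => ?_) (fun ξ => ?_) (fun ξ => ?_)
  · refine memLp_finsetSum S fun i hi => (memLp_Mhat_comp _ ?_).mul (hκ i hi)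
    fun_prop
  · exact memLp_finsetSum' S fun i hi => (hκ i hi).indicator
      (measurableSet_le (by fun_prop) measurable_const)
  · refine one_le_mul_of_one_le_of_one_le (one_le_pow₀ one_le_two) ?_
    rw [one_le_div₀ hD']
    linarith
  · refine enorm_sum_mul_le_of_subsingleton_support (hdisj ξ) (fun i hi => hδ i hi ξ)
      fun i hi _ => ?_
    exact (enorm_Mhat_le_two (one_le 0 i hi) _).trans (by norm_num)
  · simp only [← Finset.sum_sub_distrib, ← mul_sub]
    exact tsum_enorm_sum_mul_le_of_subsingleton_support (hdisj ξ) (fun i hi => hδ i hi ξ)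
      fun i hi hξ => tsum_enorm_Mhat_succ_sub_le (one_le_div i hi) (abs_le i hi ξ hξ)
  · rw [g_apply]
    refine enorm_sum_mul_le_of_subsingleton_support (hdisj ξ) (fun i hi => hδ i hi ξ)
      fun i _ _ => ?_
    split_ifs <;> simp
  · simp only [g_apply]
    exact tsum_enorm_sum_mul_Mhat_sub_le s (hdisj ξ) (fun i hi => hδ i hi ξ) hℓ hℓN
      (fun i hi => hsupp i hi ξ) hD hDN hDα

end Multifrequency

/-! ### Restricted Ramanujan sums -/

section RamanujanSum

lemma sum_Ico_eq_sum_range_of_periodic {M : Type*} [AddCommMonoid M] {F : ℕ → M} {q : ℕ}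
    (hF : Function.Periodic F q) (m : ℕ) :
    ∑ r ∈ Finset.Ico m (m + q), F r = ∑ r ∈ Finset.range q, F r := by
  have h := congrArg (fun s => (s.map F).sum) (Nat.multiset_Ico_map_mod m q)
  simp only [Multiset.map_map, Function.comp_def, hF.map_mod_nat] at h
  exact h

lemma sum_Icc_one_eq_sum_range_of_periodic {M : Type*} [AddCommMonoid M] {F : ℕ → M} {q : ℕ}
    (hF : Function.Periodic F q) : ∑ r ∈ Finset.Icc 1 q, F r = ∑ r ∈ Finset.range q, F r := by
  rw [← sum_Ico_eq_sum_range_of_periodic hF 1, add_comm, Finset.Ico_add_one_right_eq_Icc]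

lemma sum_range_eq_zero_of_map_add_eq_mul {R : Type*} [Ring R] [NoZeroDivisors R] {F : ℕ → R}
    {q t : ℕ} {ζ : R} (hF : Function.Periodic F q) (hζ : ∀ r, F (r + t) = ζ * F r) (hζ1 : ζ ≠ 1) :
    ∑ r ∈ Finset.range q, F r = 0 := by
  have shift : ζ * ∑ r ∈ Finset.range q, F r = ∑ r ∈ Finset.range q, F r := by
    calc ζ * ∑ r ∈ Finset.range q, F r = ∑ r ∈ Finset.range q, F (t + r) := by
          simp only [add_comm t, hζ, Finset.mul_sum]
      _ = ∑ r ∈ Finset.Ico t (t + q), F r := by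
          rw [Finset.sum_Ico_eq_sum_range, add_tsub_cancel_left]
      _ = ∑ r ∈ Finset.range q, F r := sum_Ico_eq_sum_range_of_periodic hF t
  refine (mul_eq_zero.1 (?_ : (ζ - 1) * _ = 0)).resolve_left (sub_ne_zero.2 hζ1)
  rw [sub_mul, one_mul, shift, sub_self]

lemma sum_divisors_filter_dvd_moebius {h : ℕ} (hh : h ≠ 0) (r : ℕ) :
    ∑ d ∈ h.divisors with d ∣ r, ArithmeticFunction.moebius d = if r.Coprime h then 1 else 0 := by
  have divisors_gcd : h.divisors.filter (· ∣ r) = (r.gcd h).divisors := by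
    ext d
    simp only [Finset.mem_filter, Nat.mem_divisors, Nat.dvd_gcd_iff, ne_eq, Nat.gcd_eq_zero_iff]
    tauto
  rw [divisors_gcd, ← ArithmeticFunction.coe_mul_zeta_apply,
    ArithmeticFunction.moebius_mul_coe_zeta, ArithmeticFunction.one_apply]

lemma sum_filter_coprime_eq_sum_moebius {R : Type*} [Ring R] {h : ℕ} (hh : h ≠ 0) (s : Finset ℕ)
    (f : ℕ → R) : ∑ r ∈ s with r.Coprime h, f r =
      ∑ d ∈ h.divisors, (ArithmeticFunction.moebius d : R) * ∑ r ∈ s with d ∣ r, f r := by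
  calc _ = ∑ r ∈ s,
          ((∑ d ∈ h.divisors with d ∣ r, ArithmeticFunction.moebius d : ℤ) : R) * f r := by
        simp only [sum_divisors_filter_dvd_moebius hh, Finset.sum_filter, Int.cast_ite,
          Int.cast_one, Int.cast_zero, ite_mul, one_mul, zero_mul]
    _ = ∑ r ∈ s, ∑ d ∈ h.divisors,
          (ArithmeticFunction.moebius d : R) * if d ∣ r then f r else 0 := by
        simp only [Int.cast_sum, Finset.sum_mul, Finset.sum_filter, Int.cast_ite, Int.cast_zero,
          ite_mul, zero_mul, mul_ite, mul_zero]
    _ = _ := by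
        rw [Finset.sum_comm]
        simp only [← Finset.mul_sum, Finset.sum_filter]

variable {g h d : ℕ} {a b : ℤ}

lemma sum_dvd_modEq_e2pi_eq_zero (hgh : 0 < g * h) (hd : d ∣ h) (hdh : d < h)
    (ha : IsCoprime a ((g * h : ℕ) : ℤ)) :
    ∑ r ∈ (Finset.Icc 1 (g * h)).filter fun r : ℕ => (r : ℤ) % g = b % g ∧ d ∣ r,
      e2pi (-(((r * a : ℤ) : ℝ) / (g * h : ℕ))) = 0 := by
  obtain ⟨k, rfl⟩ := hd
  have hg : (g : ℝ) ≠ 0 := by rintro h; simp [Nat.cast_eq_zero.1 h] at hgh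
  have hd : (d : ℝ) ≠ 0 := by rintro h; simp [Nat.cast_eq_zero.1 h] at hgh
  have hk : (k : ℝ) ≠ 0 := by rintro h; simp [Nat.cast_eq_zero.1 h] at hgh
  have hk1 : k ≠ 1 := by rintro rfl; simp at hdh
  set F : ℕ → ℂ := fun r => if (r : ℤ) % g = b % g ∧ d ∣ r then
    e2pi (-(((r * a : ℤ) : ℝ) / (g * (d * k) : ℕ))) else 0 with hF
  have twist (r j : ℕ) : F (r + g * d * j) = e2pi (-((j * a : ℤ) / k : ℝ)) * F r := by
    have modEq : ((r + g * d * j : ℕ) : ℤ) % g = r % g := by push_cast; simp [mul_assoc]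
    have dvd : d ∣ r + g * d * j ↔ d ∣ r := Nat.dvd_add_left ⟨g * j, by ring⟩
    simp only [hF, modEq, dvd, mul_ite, mul_zero, ← e2pi_add]
    congr 2
    push_cast
    field_simp
    ring
  rw [Finset.sum_filter]
  have periodic : Function.Periodic F (g * (d * k)) := fun r => by
    have := e2pi_intCast (-a)
    push_cast at this
    rw [← mul_assoc, twist, Int.cast_mul, Int.cast_natCast, mul_div_cancel_left₀ _ hk, this,
      one_mul]
  rw [sum_Icc_one_eq_sum_range_of_periodic periodic]
  refine sum_range_eq_zero_of_map_add_eq_mul periodic (fun r => twist r 1) fun h1 => hk1 ?_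
  obtain ⟨n, hn⟩ := e2pi_eq_one_iff.1 h1
  have dvd_a : (k : ℤ) ∣ a := by
    rw [← neg_div, div_eq_iff hk] at hn
    refine (dvd_neg (a := (k : ℤ))).1 ⟨n, ?_⟩
    exact_mod_cast (by simpa [mul_comm] using hn : (-a : ℝ) = k * n)
  have := ha.isUnit_of_dvd' dvd_a ⟨g * d, by push_cast; ring⟩
  simpa using Int.isUnit_iff_natAbs_eq.1 this

lemma card_dvd_modEq_le_one (hgh : Nat.Coprime g h) :
    ((Finset.Icc 1 (g * h)).filter fun r : ℕ => (r : ℤ) % g = b % g ∧ h ∣ r).card ≤ 1 := by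
  refine Finset.card_le_one.2 fun r hr s hs => ?_
  simp only [Finset.mem_filter, Finset.mem_Icc] at hr hs
  have dvd : ((g * h : ℕ) : ℤ) ∣ (r : ℤ) - s := by
    push_cast
    exact (Nat.isCoprime_iff_coprime.2 hgh).mul_dvd (Int.ModEq.dvd (hs.2.1.trans hr.2.1.symm))
      (dvd_sub (by exact_mod_cast hr.2.2) (by exact_mod_cast hs.2.2))
  have abs_lt : |(r : ℤ) - s| < (g * h : ℕ) := by rw [abs_lt]; lia
  linarith [Int.eq_zero_of_abs_lt_dvd dvd abs_lt]

/-- Möbius inversion over the divisors of `h` leaves only the term `d = h`, which has at most one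
summand. -/
lemma norm_sum_coprime_modEq_e2pi_le_one (hgh : 0 < g * h) (hc : Nat.Coprime g h)
    (hb : IsCoprime b (g : ℤ)) (ha : IsCoprime a ((g * h : ℕ) : ℤ)) :
    ‖∑ r ∈ (Finset.Icc 1 (g * h)).filter
        fun r : ℕ => Nat.gcd r (g * h) = 1 ∧ (r : ℤ) % g = b % g,
      e2pi (-(((r * a : ℤ) : ℝ) / (g * h : ℕ)))‖ ≤ 1 := by
  have hh : h ≠ 0 := (Nat.pos_of_mul_pos_left hgh).ne'
  have filter_eq : (Finset.Icc 1 (g * h)).filter (fun r : ℕ => Nat.gcd r (g * h) = 1 ∧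
      (r : ℤ) % g = b % g) = ((Finset.Icc 1 (g * h)).filter fun r : ℕ => (r : ℤ) % g = b % g).filter
        (Nat.Coprime · h) := by
    rw [Finset.filter_filter]
    refine Finset.filter_congr fun r _ => ?_
    rw [and_comm, and_congr_right_iff]
    intro hr
    have coprime_g : r.Coprime g := by
      rw [← Nat.isCoprime_iff_coprime, Int.isCoprime_iff_gcd_eq_one, ← Int.gcd_emod, hr,
        Int.gcd_emod, ← Int.isCoprime_iff_gcd_eq_one]
      exact hb
    exact Nat.coprime_mul_iff_right.trans (and_iff_right coprime_g)
  rw [filter_eq, sum_filter_coprime_eq_sum_moebius hh]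
  simp only [Finset.filter_filter]
  rw [Finset.sum_eq_single_of_mem h (Nat.mem_divisors_self h hh) fun d hd hdh => ?_]
  · have moebius_le : ‖((ArithmeticFunction.moebius h : ℤ) : ℂ)‖ ≤ 1 := by
      rw [Complex.norm_intCast]
      exact_mod_cast ArithmeticFunction.abs_moebius_le_one
    rw [norm_mul]
    refine mul_le_one₀ moebius_le (norm_nonneg _) ((norm_sum_le _ _).trans ?_)
    simp only [norm_e2pi, Finset.sum_const, nsmul_eq_mul, mul_one]
    exact_mod_cast card_dvd_modEq_le_one hc
  · have hd' := Nat.dvd_of_mem_divisors hd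
    rw [sum_dvd_modEq_e2pi_eq_zero hgh hd' ((Nat.le_of_dvd (by lia) hd').lt_of_ne hdh) ha,
      mul_zero]

end RamanujanSum

/-! ### Heights and the separation of the arcs -/

section Height

variable {y q : ℕ}

lemma lcm_eq_mul_hgt (h : hgt y q ≠ 0) : Nat.lcm y q = y * hgt y q := by
  unfold hgt at h ⊢
  split_ifs at h ⊢
  · exact absurd rfl h
  · exact (Nat.mul_div_cancel' (Nat.dvd_lcm_left y q)).symm

lemma gcd_mul_hgt (hy : 0 < y) (h : hgt y q ≠ 0) : Nat.gcd y q * hgt y q = q := by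
  refine Nat.eq_of_mul_eq_mul_left hy ?_
  rw [← Nat.gcd_mul_lcm y q, lcm_eq_mul_hgt h]
  ring

lemma pos_of_hgt_ne_zero (hy : 0 < y) (h : hgt y q ≠ 0) : 0 < q := by
  rw [← gcd_mul_hgt hy h]
  exact Nat.mul_pos (Nat.gcd_pos_of_pos_left q hy) (Nat.pos_of_ne_zero h)

lemma le_mul_hgt (hy : 0 < y) (h : hgt y q ≠ 0) : q ≤ y * hgt y q := by
  conv_lhs => rw [← gcd_mul_hgt hy h]
  exact Nat.mul_le_mul_right _ (Nat.gcd_le_left q hy)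

lemma coprime_gcd_hgt (hy : 0 < y) (h : hgt y q ≠ 0) :
    Nat.Coprime (Nat.gcd y q) (hgt y q) := by
  have gcd_pos : 0 < Nat.gcd y q := Nat.gcd_pos_of_pos_left q hy
  have div_gcd : q / Nat.gcd y q = hgt y q :=
    Nat.div_eq_of_eq_mul_right gcd_pos (gcd_mul_hgt hy h).symm
  by_contra hc
  have one_lt : 1 < Nat.gcd (Nat.gcd y q) (hgt y q) :=
    lt_of_le_of_ne (Nat.gcd_pos_of_pos_left _ gcd_pos) (Ne.symm hc)
  have one_lt_gcd := one_lt.trans_le (Nat.gcd_le_left _ gcd_pos)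
  have one_lt_hgt := one_lt.trans_le (Nat.gcd_le_right _ (Nat.pos_of_ne_zero h))
  have gcd_lt : Nat.gcd y q < q := by
    conv_rhs => rw [← gcd_mul_hgt hy h]
    exact lt_mul_of_one_lt_right gcd_pos one_lt_hgt
  exact h (if_pos ⟨one_lt_gcd, gcd_lt, by rwa [div_gcd]⟩)

lemma coprime_hgt (hy : 0 < y) (h : hgt y q ≠ 0) : Nat.Coprime y (hgt y q) := by
  refine (Nat.coprime_of_dvd fun p hp hph hpy => hp.one_lt.ne' ?_).symm
  have hpq : p ∣ q := hph.trans ⟨Nat.gcd y q, by rw [mul_comm, gcd_mul_hgt hy h]⟩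
  exact Nat.dvd_one.1 (coprime_gcd_hgt hy h ▸ Nat.dvd_gcd (Nat.dvd_gcd hpy hpq) hph)

lemma totient_lcm (hy : 0 < y) (h : hgt y q ≠ 0) :
    Nat.totient (Nat.lcm y q) = Nat.totient y * Nat.totient (hgt y q) := by
  rw [lcm_eq_mul_hgt h, Nat.totient_mul (coprime_hgt hy h)]

lemma norm_Ups_le {a b : ℤ} (hy : 0 < y) (h : hgt y q ≠ 0) (hb : Int.gcd b y = 1)
    (ha : Int.gcd a q = 1) : ‖Ups y b a q‖ ≤ 1 / Nat.totient (hgt y q) := by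
  have hq := gcd_mul_hgt hy h
  have sum_le := norm_sum_coprime_modEq_e2pi_le_one (a := a) (b := b)
    (hq.symm ▸ pos_of_hgt_ne_zero hy h) (coprime_gcd_hgt hy h)
    ((Int.isCoprime_iff_gcd_eq_one.2 hb).of_isCoprime_of_dvd_right
      (Int.natCast_dvd_natCast.2 (Nat.gcd_dvd_left y q)))
    (hq.symm ▸ Int.isCoprime_iff_gcd_eq_one.2 ha)
  rw [hq] at sum_le
  have hφ : (Nat.totient y : ℂ) ≠ 0 := Nat.cast_ne_zero.2 (Nat.totient_pos.2 hy).ne'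
  rw [Ups, norm_mul, totient_lcm hy h, Nat.cast_mul, div_mul_cancel_left₀ hφ, norm_inv,
    Complex.norm_natCast, ← one_div]
  exact mul_le_of_le_one_right (by positivity) sum_le

lemma one_div_card_add_one_le_prod (S : Finset ℕ) :
    (∀ p ∈ S, 2 ≤ p) → 1 / ((S.card : ℝ) + 1) ≤ ∏ p ∈ S, (1 - (p : ℝ)⁻¹) := by
  induction S using Finset.induction_on_max with
  | empty => simp
  | insert m S hm ih =>
    intro h
    have ih := ih fun p hp => h p (Finset.mem_insert_of_mem hp)
    have hmS : m ∉ S := fun hmem => lt_irrefl m (hm m hmem)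
    have card_add_two_le : (S.card : ℝ) + 2 ≤ m := by
      have hsub : S ⊆ Finset.Ico 2 m := fun p hp =>
        Finset.mem_Ico.2 ⟨h p (Finset.mem_insert_of_mem hp), hm p hp⟩
      have := Finset.card_le_card hsub
      rw [Nat.card_Ico] at this
      exact_mod_cast Nat.add_le_of_le_sub (h m (Finset.mem_insert_self m S)) this
    rw [Finset.prod_insert hmS, Finset.card_insert_of_notMem hmS]
    calc (1 : ℝ) / ((S.card + 1 : ℕ) + 1)
        = (1 - ((S.card : ℝ) + 2)⁻¹) * (1 / ((S.card : ℝ) + 1)) := by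
          push_cast
          field_simp
          ring
      _ ≤ (1 - (m : ℝ)⁻¹) * ∏ p ∈ S, (1 - (p : ℝ)⁻¹) := by
          gcongr
          exact sub_nonneg.2 (inv_le_one_of_one_le₀ (by linarith [S.card.cast_nonneg (α := ℝ)]))

lemma two_pow_card_primeFactors_le {h : ℕ} (hh : h ≠ 0) : 2 ^ h.primeFactors.card ≤ h :=
  (Finset.pow_card_le_prod _ _ _ fun _ hp => (Nat.prime_of_mem_primeFactors hp).two_le).trans
    (Nat.le_of_dvd (Nat.pos_of_ne_zero hh) (Nat.prod_primeFactors_dvd h))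

lemma le_totient_mul {h L : ℕ} (hh : h ≠ 0) (hL : h ≤ 2 ^ L) :
    (h : ℝ) ≤ Nat.totient h * (L + 1) := by
  have totient_eq : (Nat.totient h : ℝ) = h * ∏ p ∈ h.primeFactors, (1 - (p : ℝ)⁻¹) := by
    simpa using congrArg (Rat.cast : ℚ → ℝ) (Nat.totient_eq_mul_prod_factors h)
  have card_le : h.primeFactors.card ≤ L :=
    (Nat.pow_le_pow_iff_right one_lt_two).1 ((two_pow_card_primeFactors_le hh).trans hL)
  have le_prod : 1 / ((L : ℝ) + 1) ≤ ∏ p ∈ h.primeFactors, (1 - (p : ℝ)⁻¹) :=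
    (one_div_le_one_div_of_le (by positivity) (by gcongr)).trans
      (one_div_card_add_one_le_prod _ fun _ hp => (Nat.prime_of_mem_primeFactors hp).two_le)
  rw [totient_eq, mul_assoc]
  exact le_mul_of_one_le_right (by positivity) ((div_le_iff₀ (by positivity)).1 le_prod)

lemma norm_Ups_le_div {L : ℕ} {a b : ℤ} {K : ℝ} (hy : 0 < y) (hK : 0 < K) (hKq : K ≤ hgt y q)
    (hqL : hgt y q ≤ 2 ^ L) (hb : Int.gcd b y = 1) (ha : Int.gcd a q = 1) :
    ‖Ups y b a q‖ ≤ (L + 1) / K := by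
  have h : hgt y q ≠ 0 := Nat.cast_ne_zero.1 (hK.trans_le hKq).ne'
  have hφ : (0 : ℝ) < Nat.totient (hgt y q) :=
    Nat.cast_pos.2 (Nat.totient_pos.2 (Nat.pos_of_ne_zero h))
  refine (norm_Ups_le hy h hb ha).trans ?_
  rw [div_le_div_iff₀ hφ hK, one_mul, mul_comm]
  exact hKq.trans (le_totient_mul h hqL)

end Height

section Separation

lemma div_eq_div_of_mul_abs_sub_lt_one {a a' q q' m : ℕ} (hm : 0 < m) (hq : q ∣ m) (hq' : q' ∣ m)
    (h : m * |(a : ℝ) / q - a' / q'| < 1) : (a : ℝ) / q = a' / q' := by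
  obtain ⟨c, rfl⟩ := hq
  obtain ⟨c', hc'⟩ := hq'
  have hm' : ((q * c : ℕ) : ℝ) ≠ 0 := Nat.cast_ne_zero.2 hm.ne'
  have hq0 : (q : ℝ) ≠ 0 := by rintro h; simp [h] at hm'
  have hq0' : (q' : ℝ) ≠ 0 := by rintro h; simp [hc', h] at hm'
  have scaled_eq : ((q * c : ℕ) : ℝ) * (a / q - a' / q') = (a * c - a' * c' : ℤ) := by
    have left : ((q * c : ℕ) : ℝ) * (a / q) = a * c := by push_cast; field_simp
    have right : ((q * c : ℕ) : ℝ) * (a' / q') = a' * c' := by rw [hc']; push_cast; field_simp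
    rw [mul_sub, left, right]
    push_cast
    rfl
  have scaled_abs_lt : |((a * c - a' * c' : ℤ) : ℝ)| < 1 := by
    rwa [← scaled_eq, abs_mul, Nat.abs_cast]
  rw [← Int.cast_abs, ← Int.cast_one, Int.cast_lt, Int.abs_lt_one_iff] at scaled_abs_lt
  rw [scaled_abs_lt, Int.cast_zero] at scaled_eq
  exact sub_eq_zero.1 ((mul_eq_zero.1 scaled_eq).resolve_left hm')

lemma eq_and_eq_of_div_eq_div {a a' q q' : ℕ} (hq : 0 < q) (hq' : 0 < q') (ha : Nat.Coprime a q)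
    (ha' : Nat.Coprime a' q') (h : (a : ℝ) / q = a' / q') : a = a' ∧ q = q' := by
  have h_rat : ((a : ℤ) : ℚ) / (q : ℤ) = (a' : ℤ) / (q' : ℤ) := by
    rw [← Rat.cast_inj (α := ℝ)]
    simpa using h
  exact_mod_cast Rat.div_int_inj (a := a) (c := a') (Int.natCast_pos.2 hq) (Int.natCast_pos.2 hq')
    ha ha' h_rat

lemma mul_mul_lt_half {y h h' u : ℝ} (hy : 1 ≤ y) (hh : 0 < h) (hh' : h' < 2 * h) (hu : 0 ≤ u)
    (hhu : (y * h) ^ 2 * u ≤ 1 / 4) : y * h * h' * u < 1 / 2 := by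
  rcases hu.eq_or_lt with rfl | hu
  · norm_num
  · calc y * h * h' * u < y * h * (2 * h) * u := by gcongr
      _ ≤ y * h * (2 * (y * h)) * u := by gcongr; exact le_mul_of_one_le_left hh.le hy
      _ = 2 * ((y * h) ^ 2 * u) := by ring
      _ ≤ 1 / 2 := by linarith

lemma eq_and_eq_of_lcm_sq_mul_abs_sub_le {y a a' q q' : ℕ} {ξ : ℝ} (hy : 0 < y)
    (h0 : hgt y q ≠ 0) (h0' : hgt y q' ≠ 0) (hlt : hgt y q < 2 * hgt y q')
    (hlt' : hgt y q' < 2 * hgt y q) (ha : Nat.Coprime a q) (ha' : Nat.Coprime a' q')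
    (hξ : (Nat.lcm y q : ℝ) ^ 2 * |ξ - a / q| ≤ 1 / 4)
    (hξ' : (Nat.lcm y q' : ℝ) ^ 2 * |ξ - a' / q'| ≤ 1 / 4) : a = a' ∧ q = q' := by
  have hy1 : (1 : ℝ) ≤ y := Nat.one_le_cast.2 hy
  have dvd {r : ℕ} (h : hgt y r ≠ 0) : r ∣ y * hgt y r :=
    lcm_eq_mul_hgt h ▸ Nat.dvd_lcm_right y r
  refine eq_and_eq_of_div_eq_div (pos_of_hgt_ne_zero hy h0) (pos_of_hgt_ne_zero hy h0') ha ha'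
    (div_eq_div_of_mul_abs_sub_lt_one (m := y * hgt y q * hgt y q') (by positivity)
      ((dvd h0).trans (Nat.dvd_mul_right _ _))
      ((dvd h0').trans ⟨hgt y q, by ring⟩) ?_)
  rw [lcm_eq_mul_hgt h0, Nat.cast_mul] at hξ
  rw [lcm_eq_mul_hgt h0', Nat.cast_mul] at hξ'
  have near := mul_mul_lt_half (h' := hgt y q') hy1 (by positivity) (by exact_mod_cast hlt')
    (abs_nonneg _) hξ
  have near' := mul_mul_lt_half (h' := hgt y q) hy1 (by positivity) (by exact_mod_cast hlt)
    (abs_nonneg _) hξ'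
  calc _ ≤ ((y * hgt y q * hgt y q' : ℕ) : ℝ) * (|ξ - a / q| + |ξ - a' / q'|) := by
        gcongr
        rw [add_comm]
        refine le_trans (le_of_eq ?_) (abs_sub (ξ - a' / q') (ξ - a / q))
        congr 1
        ring
    _ = y * hgt y q * hgt y q' * |ξ - a / q| + y * hgt y q' * hgt y q * |ξ - a' / q'| := by
        push_cast
        ring
    _ < 1 := by linarith

end Separation

/-! ### Dyadic height blocks -/

section HeightBlock

/-- The properties of the bump function `χ` that the estimates use. -/
structure IsCutoff (χ : ℝ → ℝ) : Prop where
  measurable : Measurable χ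
  abs_le_one (x : ℝ) : |χ x| ≤ 1
  abs_le_of_ne_zero (x : ℝ) : χ x ≠ 0 → |x| ≤ 1 / 4

/-- The reduced fractions `a / q` in `(0, 1]` whose denominator has height in `[K, 2K)`, encoded as
`⟨q, a⟩`. -/
def heightBlock (y : ℕ) (K : ℝ) : Finset (Σ _ : ℕ, ℕ) :=
  ((Finset.Icc 1 (y * ⌈2 * K⌉₊)).filter fun q : ℕ => K ≤ hgt y q ∧ (hgt y q : ℝ) < 2 * K).sigma
    fun q => (Finset.Icc 1 q).filter fun a => Nat.gcd a q = 1

/-- The factor `Υ(a,q) χ(ℓ²(ξ - a/q))` of `L̂^{a,q}_{N,y}(ξ)`, which does not depend on `N`; here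
`p = ⟨q, a⟩`. -/
def arcWeight (χ : ℝ → ℝ) (y : ℕ) (b : ℤ) (p : Σ _ : ℕ, ℕ) (ξ : ℝ) : ℂ :=
  Ups y b p.2 p.1 * (χ ((Nat.lcm y p.1 : ℝ) ^ 2 * (ξ - p.2 / p.1)) : ℝ)

/-- The part of the High multiplier at scale `N = 2 ^ n` coming from denominators of height in
`[K, 2K)`. The constraint `h_y(q) ≤ N^{1/10}` is imposed without roots. -/
def blockMultiplier (χ : ℝ → ℝ) (y : ℕ) (b : ℤ) (K : ℝ) (n : ℕ) : ℝ → ℂ :=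
  ∑ p ∈ heightBlock y K with hgt y p.1 ^ 10 ≤ 2 ^ n, Lhat χ y b (2 ^ n) p.2 p.1

variable {χ : ℝ → ℝ} {y L n : ℕ} {b : ℤ} {K : ℝ} {p p' : Σ _ : ℕ, ℕ} {ξ : ℝ}

lemma mem_heightBlock (hy : 0 < y) (hK : 0 < K) :
    p ∈ heightBlock y K ↔ (K ≤ hgt y p.1 ∧ (hgt y p.1 : ℝ) < 2 * K) ∧
      (1 ≤ p.2 ∧ p.2 ≤ p.1) ∧ Nat.gcd p.2 p.1 = 1 := by
  simp only [heightBlock, Finset.mem_sigma, Finset.mem_filter, Finset.mem_Icc, and_assoc]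
  refine ⟨fun h => h.2.2, fun h => ⟨?_, ?_, h⟩⟩
  · exact h.2.2.1.trans h.2.2.2.1
  · refine (le_mul_hgt hy (Nat.cast_ne_zero.1 (hK.trans_le h.1).ne')).trans ?_
    exact Nat.mul_le_mul_left y (Nat.cast_le.1 (h.2.1.le.trans (Nat.le_ceil _)))

lemma hgt_ne_zero_of_mem_heightBlock (hy : 0 < y) (hK : 0 < K) (hp : p ∈ heightBlock y K) :
    hgt y p.1 ≠ 0 :=
  Nat.cast_ne_zero.1 (hK.trans_le ((mem_heightBlock hy hK).1 hp).1.1).ne'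

lemma Lhat_eq_arcWeight_mul (N : ℝ) :
    Lhat χ y b N p.2 p.1 = arcWeight χ y b p * fun ξ =>
      Mhat (N / Nat.lcm y p.1) (Nat.lcm y p.1 * (ξ - p.2 / p.1)) :=
  funext fun _ => mul_right_comm _ _ _

lemma memLp_arcWeight (hχ : IsCutoff χ) (y : ℕ) (b : ℤ) (p : Σ _ : ℕ, ℕ) :
    MemLp (arcWeight χ y b p) ∞ circleMeasure := by
  refine MemLp.const_mul (memLp_top_of_bound ?_ 1 (.of_forall fun ξ => ?_)) _
  · exact (Complex.measurable_ofReal.comp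
      (hχ.measurable.comp (by fun_prop))).aestronglyMeasurable
  · exact (Complex.norm_real _).trans_le (hχ.abs_le_one _)

lemma memLp_Lhat (hχ : IsCutoff χ) (y : ℕ) (b : ℤ) (N : ℝ) (p : Σ _ : ℕ, ℕ) :
    MemLp (Lhat χ y b N p.2 p.1) ∞ circleMeasure := by
  rw [Lhat_eq_arcWeight_mul]
  exact (memLp_Mhat_comp _ (by fun_prop)).mul (memLp_arcWeight hχ y b p)

lemma memLp_blockMultiplier (hχ : IsCutoff χ) (y : ℕ) (b : ℤ) (K : ℝ) (n : ℕ) :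
    MemLp (blockMultiplier χ y b K n) ∞ circleMeasure :=
  memLp_finsetSum' _ fun p _ => memLp_Lhat hχ y b (2 ^ n) p

lemma enorm_arcWeight_le (hχ : IsCutoff χ) (hy : 0 < y) (hb : Int.gcd b y = 1) (hK : 0 < K)
    (hL : 2 * K ≤ 2 ^ L) (hp : p ∈ heightBlock y K) (ξ : ℝ) :
    ‖arcWeight χ y b p ξ‖ₑ ≤ ENNReal.ofReal ((L + 1) / K) := by
  obtain ⟨⟨hKp, hpK⟩, -, hgcd⟩ := (mem_heightBlock hy hK).1 hp
  rw [← ofReal_norm, arcWeight, norm_mul, Complex.norm_real]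
  refine ENNReal.ofReal_le_ofReal ((mul_le_of_le_one_right (norm_nonneg _)
    (hχ.abs_le_one _)).trans ?_)
  exact norm_Ups_le_div hy hK hKp (by exact_mod_cast hpK.le.trans hL) hb hgcd

lemma lcm_sq_mul_abs_sub_le_of_arcWeight_ne_zero (hχ : IsCutoff χ) (h : arcWeight χ y b p ξ ≠ 0) :
    (Nat.lcm y p.1 : ℝ) ^ 2 * |ξ - p.2 / p.1| ≤ 1 / 4 := by
  simpa only [abs_mul, abs_pow, Nat.abs_cast] using
    hχ.abs_le_of_ne_zero _ (Complex.ofReal_ne_zero.1 (right_ne_zero_of_mul h))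

lemma eq_of_arcWeight_ne_zero (hχ : IsCutoff χ) (hy : 0 < y) (hK : 0 < K)
    (hp : p ∈ heightBlock y K) (hp' : p' ∈ heightBlock y K) (h : arcWeight χ y b p ξ ≠ 0)
    (h' : arcWeight χ y b p' ξ ≠ 0) : p = p' := by
  have h0 := hgt_ne_zero_of_mem_heightBlock hy hK hp
  have h0' := hgt_ne_zero_of_mem_heightBlock hy hK hp'
  obtain ⟨⟨hKp, hpK⟩, -, hgcd⟩ := (mem_heightBlock hy hK).1 hp
  obtain ⟨⟨hKp', hpK'⟩, -, hgcd'⟩ := (mem_heightBlock hy hK).1 hp'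
  have hlt : (hgt y p.1 : ℝ) < 2 * hgt y p'.1 := by linarith
  have hlt' : (hgt y p'.1 : ℝ) < 2 * hgt y p.1 := by linarith
  obtain ⟨ha, hq⟩ := eq_and_eq_of_lcm_sq_mul_abs_sub_le hy h0 h0' (by exact_mod_cast hlt)
    (by exact_mod_cast hlt') hgcd hgcd' (lcm_sq_mul_abs_sub_le_of_arcWeight_ne_zero hχ h)
    (lcm_sq_mul_abs_sub_le_of_arcWeight_ne_zero hχ h')
  exact Sigma.ext hq (heq_of_eq ha)

lemma mul_le_of_sq_le_of_pow_le {y h N : ℕ} (hy : y ^ 2 ≤ N) (hh : h ^ 10 ≤ N) : y * h ≤ N := by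
  refine (Nat.pow_le_pow_iff_left two_ne_zero).1 ?_
  calc (y * h) ^ 2 = y ^ 2 * h ^ 2 := mul_pow ..
    _ ≤ y ^ 2 * (h ^ 2) ^ 5 := by exact Nat.mul_le_mul_left _ (Nat.le_self_pow (by norm_num) _)
    _ ≤ N * N := by gcongr; rwa [← pow_mul]
    _ = N ^ 2 := (sq N).symm

lemma lcm_pos_of_mem_heightBlock (hy : 0 < y) (hK : 0 < K) (hp : p ∈ heightBlock y K) :
    (0 : ℝ) < Nat.lcm y p.1 :=
  Nat.cast_pos.2 <| Nat.lcm_pos hy <|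
    pos_of_hgt_ne_zero hy (hgt_ne_zero_of_mem_heightBlock hy hK hp)

lemma lcm_le_two_pow (hy : 0 < y) (hK : 0 < K) (hp : p ∈ heightBlock y K) (hyn : y ^ 2 ≤ 2 ^ n)
    (hpn : hgt y p.1 ^ 10 ≤ 2 ^ n) : (Nat.lcm y p.1 : ℝ) ≤ 2 ^ n := by
  rw [lcm_eq_mul_hgt (hgt_ne_zero_of_mem_heightBlock hy hK hp)]
  exact_mod_cast mul_le_of_sq_le_of_pow_le hyn hpn

lemma enorm_blockMultiplier_le (hχ : IsCutoff χ) (hy : 0 < y) (hb : Int.gcd b y = 1) (hK : 0 < K)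
    (hL : 2 * K ≤ 2 ^ L) (hyn : y ^ 2 ≤ 2 ^ n) (ξ : ℝ) :
    ‖blockMultiplier χ y b K n ξ‖ₑ ≤ ENNReal.ofReal ((L + 1) / K) * 2 := by
  simp only [blockMultiplier, Finset.sum_apply, Lhat_eq_arcWeight_mul, Pi.mul_apply]
  have mem {p} (hp : p ∈ (heightBlock y K).filter fun p => hgt y p.1 ^ 10 ≤ 2 ^ n) :=
    (Finset.mem_filter.1 hp).1
  refine enorm_sum_mul_le_of_subsingleton_support
    (fun p hp p' hp' => eq_of_arcWeight_ne_zero hχ hy hK (mem hp) (mem hp'))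
    (fun p hp => enorm_arcWeight_le hχ hy hb hK hL (mem hp) ξ) fun p hp _ => ?_
  refine enorm_Mhat_le_two ((one_le_div (lcm_pos_of_mem_heightBlock hy hK (mem hp))).2 ?_) _
  exact lcm_le_two_pow hy hK (mem hp) hyn (Finset.mem_filter.1 hp).2

lemma blockMultiplier_eq_zero (hy : 0 < y) (hK : 0 < K) (h : 2 ^ n < K ^ 10) :
    blockMultiplier χ y b K n = 0 := by
  rw [blockMultiplier, Finset.filter_false_of_mem, Finset.sum_empty]
  intro p hp hpn
  have hpn' : (hgt y p.1 : ℝ) ^ 10 ≤ 2 ^ n := by exact_mod_cast hpn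
  have : K ^ 10 ≤ (hgt y p.1 : ℝ) ^ 10 := by gcongr; exact ((mem_heightBlock hy hK).1 hp).1.1
  linarith

lemma hgt_pow_le_two_pow (hy : 0 < y) (hK : 0 < K) (h : (2 * K) ^ 10 ≤ 2 ^ n)
    (hp : p ∈ heightBlock y K) : hgt y p.1 ^ 10 ≤ 2 ^ n := by
  have : (hgt y p.1 : ℝ) ^ 10 ≤ 2 ^ n :=
    (pow_le_pow_left₀ (by positivity) ((mem_heightBlock hy hK).1 hp).1.2.le _).trans h
  exact_mod_cast this

lemma blockMultiplier_eq_sum (hy : 0 < y) (hK : 0 < K) (h : (2 * K) ^ 10 ≤ 2 ^ n) :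
    blockMultiplier χ y b K n = ∑ p ∈ heightBlock y K, Lhat χ y b (2 ^ n) p.2 p.1 := by
  rw [blockMultiplier, Finset.filter_true_of_mem fun p hp => hgt_pow_le_two_pow hy hK h hp]

lemma four_mul_factorial_le {m L : ℕ} (hL : 1 ≤ L) (hm : m ≤ 2 ^ L) :
    4 * m.factorial ≤ 2 ^ 2 ^ (2 * L) := by
  have factorial_le : m.factorial ≤ 2 ^ (L * 2 ^ L) := by
    calc m.factorial ≤ (2 ^ L).factorial := Nat.factorial_le hm
      _ ≤ (2 ^ L) ^ 2 ^ L := Nat.factorial_le_pow _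
      _ = 2 ^ (L * 2 ^ L) := (pow_mul ..).symm
  have exponent_le : 2 + L * 2 ^ L ≤ 2 ^ (2 * L) := by
    calc 2 + L * 2 ^ L ≤ 2 ^ L + L * 2 ^ L := by gcongr; exact Nat.le_self_pow (by omega) 2
      _ = (L + 1) * 2 ^ L := by ring
      _ ≤ 2 ^ L * 2 ^ L := by gcongr; exact Nat.lt_two_pow_self
      _ = 2 ^ (2 * L) := by rw [← pow_add, two_mul]
  calc 4 * m.factorial ≤ 2 ^ 2 * 2 ^ (L * 2 ^ L) := Nat.mul_le_mul_left 4 factorial_le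
    _ = 2 ^ (2 + L * 2 ^ L) := (pow_add ..).symm
    _ ≤ 2 ^ 2 ^ (2 * L) := Nat.pow_le_pow_right two_pos exponent_le

lemma exists_factorial_mul_div_eq_intCast (hy : 0 < y) (hK : 0 < K) (hp : p ∈ heightBlock y K) :
    ∃ k : ℤ, ((y * ⌈2 * K⌉₊.factorial : ℕ) : ℤ) * (p.2 / p.1 : ℝ) = k := by
  have h0 := hgt_ne_zero_of_mem_heightBlock hy hK hp
  have dvd : p.1 ∣ y * ⌈2 * K⌉₊.factorial := by
    refine (Nat.dvd_lcm_right y p.1).trans ?_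
    rw [lcm_eq_mul_hgt h0]
    refine Nat.mul_dvd_mul_left y (Nat.dvd_factorial (Nat.pos_of_ne_zero h0) ?_)
    exact Nat.cast_le.1 (((mem_heightBlock hy hK).1 hp).1.2.le.trans (Nat.le_ceil _))
  obtain ⟨c, hc⟩ := dvd
  have hq : (p.1 : ℝ) ≠ 0 := Nat.cast_ne_zero.2 (pos_of_hgt_ne_zero hy h0).ne'
  refine ⟨c * p.2, ?_⟩
  rw [Int.cast_natCast, hc]
  push_cast
  field_simp

variable {H : ℝ → ℂ}

lemma eLpNorm_iSup_complete_block_le (hχ : IsCutoff χ) (hy : 0 < y) (hb : Int.gcd b y = 1)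
    (hK : 1 ≤ K) (hL : 2 * K ≤ 2 ^ L) (hyn : y ^ 2 ≤ 2 ^ n) (hKn : (2 * K) ^ 10 ≤ 2 ^ n)
    (hH : MemLp H 2 circleMeasure) :
    eLpNorm (fun x => ⨆ k, ‖invFourier (blockMultiplier χ y b K (n + k) * H) x‖ₑ) 2 count ≤
      ((2 * L : ℕ) + 20) * (ENNReal.ofReal ((L + 1) / K) * 317 * eLpNorm H 2 circleMeasure) := by
  have hK0 : 0 < K := by linarith
  have hL1 : 1 ≤ L := Nat.one_le_iff_ne_zero.2 <| by rintro rfl; linarith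
  have expand (k : ℕ) : blockMultiplier χ y b K (n + k) = fun ξ => ∑ p ∈ heightBlock y K,
      arcWeight χ y b p ξ * Mhat (2 ^ k * (2 ^ n / Nat.lcm y p.1))
        (Nat.lcm y p.1 * (ξ - p.2 / p.1)) := by
    rw [blockMultiplier_eq_sum hy hK0 (hKn.trans (pow_le_pow_right₀ one_le_two (by omega)))]
    ext ξ
    simp only [Finset.sum_apply, Lhat_eq_arcWeight_mul, Pi.mul_apply, ← mul_div_assoc, ← pow_add,
      add_comm]
  have D_pos : (0 : ℤ) < (y * ⌈2 * K⌉₊.factorial : ℕ) :=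
    Int.natCast_pos.2 (Nat.mul_pos hy (Nat.factorial_pos _))
  simp only [expand]
  refine eLpNorm_iSup_invFourier_multifrequency_le (κ := arcWeight χ y b)
    (α := fun p => p.2 / p.1) (N := 2 ^ n) (ℓ := fun p => Nat.lcm y p.1)
    (D := (y * ⌈2 * K⌉₊.factorial : ℕ)) (2 * L) hH
    (fun p _ => memLp_arcWeight hχ y b p)
    (fun p hp => enorm_arcWeight_le hχ hy hb hK0 hL hp)
    (fun ξ p hp p' hp' => eq_of_arcWeight_ne_zero hχ hy hK0 hp hp')
    (fun p hp => lcm_pos_of_mem_heightBlock hy hK0 hp)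
    (fun p hp => lcm_le_two_pow hy hK0 hp hyn (hgt_pow_le_two_pow hy hK0 hKn hp))
    (fun p hp ξ hξ => ?_) D_pos ?_
    (fun p hp => exists_factorial_mul_div_eq_intCast hy hK0 hp)
  · refine le_trans ?_ (lcm_sq_mul_abs_sub_le_of_arcWeight_ne_zero hχ hξ)
    gcongr
    exact le_self_pow₀ (Nat.one_le_cast.2 (Nat.cast_pos.1
      (lcm_pos_of_mem_heightBlock hy hK0 hp))) two_ne_zero
  · have factorial_le : (4 * ⌈2 * K⌉₊.factorial : ℝ) ≤ 2 ^ 2 ^ (2 * L) := by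
      exact_mod_cast four_mul_factorial_le hL1 (Nat.ceil_le.2 (by exact_mod_cast hL))
    have y_le : (y : ℝ) ≤ 2 ^ n := by
      exact_mod_cast (Nat.le_self_pow two_ne_zero y).trans hyn
    push_cast
    calc (4 : ℝ) * (y * ⌈2 * K⌉₊.factorial) = 4 * ⌈2 * K⌉₊.factorial * y := by ring
      _ ≤ 2 ^ 2 ^ (2 * L) * 2 ^ n := by gcongr

lemma tsum_ite_two_pow_mem_Ico_le (A : ℝ) (k : ℕ) (c : ℝ≥0∞) :
    ∑' n : ℕ, (if A ≤ 2 ^ n ∧ (2 : ℝ) ^ n < 2 ^ k * A then c else 0) ≤ k * c := by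
  have exists_le : ∃ n : ℕ, A ≤ 2 ^ n :=
    (pow_unbounded_of_one_lt A one_lt_two).imp fun _ => le_of_lt
  classical
  set m := Nat.find exists_le
  have mem_Ico (n : ℕ) (h : A ≤ 2 ^ n ∧ (2 : ℝ) ^ n < 2 ^ k * A) : n ∈ Finset.Ico m (m + k) := by
    refine Finset.mem_Ico.2 ⟨Nat.find_min' exists_le h.1, ?_⟩
    have : (2 : ℝ) ^ n < 2 ^ (m + k) := h.2.trans_le <| by
      rw [pow_add, mul_comm]
      gcongr
      exact Nat.find_spec exists_le
    exact (pow_lt_pow_iff_right₀ one_lt_two).1 this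
  rw [tsum_eq_sum (s := Finset.Ico m (m + k)) fun n hn => if_neg (mt (mem_Ico n) hn)]
  calc _ ≤ ∑ _n ∈ Finset.Ico m (m + k), c := by
        gcongr
        split_ifs
        exacts [le_rfl, zero_le]
    _ = k * c := by rw [Finset.sum_const, Nat.card_Ico, Nat.add_sub_cancel_left, nsmul_eq_mul]

/-- There are only ten such scales, so no maximal cancellation is needed. -/
lemma eLpNorm_iSup_incomplete_block_le (hχ : IsCutoff χ) (hy : 0 < y) (hb : Int.gcd b y = 1)
    (hK : 0 < K) (hL : 2 * K ≤ 2 ^ L) (hH : MemLp H 2 circleMeasure) :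
    eLpNorm (fun x => ⨆ n : ℕ,
      ‖invFourier ((if y ^ 2 < 2 ^ n ∧ K ^ 10 ≤ 2 ^ n ∧ (2 : ℝ) ^ n < (2 * K) ^ 10 then
        blockMultiplier χ y b K n else 0) * H) x‖ₑ) 2 count ≤
      10 * (ENNReal.ofReal ((L + 1) / K) * 2) * eLpNorm H 2 circleMeasure := by
  refine eLpNorm_iSup_invFourier_le hH (fun n => ?_) fun ξ => ?_
  · split_ifs
    exacts [memLp_blockMultiplier hχ y b K n, MemLp.zero]
  · refine le_trans (ENNReal.tsum_le_tsum fun n => ?_)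
      (tsum_ite_two_pow_mem_Ico_le (K ^ 10) 10 (ENNReal.ofReal ((L + 1) / K) * 2))
    rw [← mul_pow]
    split_ifs with h h'
    · exact enorm_blockMultiplier_le hχ hy hb hK hL h.1.le ξ
    · exact absurd h.2 h'
    · simp
    · simp

lemma eLpNorm_iSup_block_le (hχ : IsCutoff χ) (hy : 0 < y) (hb : Int.gcd b y = 1)
    (hK : 1 ≤ K) (hL : 2 * K ≤ 2 ^ L) (hH : MemLp H 2 circleMeasure) :
    eLpNorm (fun x => ⨆ (n : ℕ) (_ : y ^ 2 < 2 ^ n),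
        ‖invFourier (blockMultiplier χ y b K n * H) x‖ₑ) 2 count ≤
      ENNReal.ofReal (6360 * ((L + 1) ^ 2 / K)) * eLpNorm H 2 circleMeasure := by
  have hK0 : 0 < K := by linarith
  have exists_complete : ∃ n : ℕ, y ^ 2 < 2 ^ n ∧ (2 * K) ^ 10 ≤ 2 ^ n := by
    obtain ⟨n, hn⟩ := pow_unbounded_of_one_lt ((y : ℝ) ^ 2 + (2 * K) ^ 10) one_lt_two
    have hyn : (y : ℝ) ^ 2 < 2 ^ n := (le_add_of_nonneg_right (by positivity)).trans_lt hn
    exact ⟨n, by exact_mod_cast hyn, (le_add_of_nonneg_left (by positivity)).trans hn.le⟩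
  classical
  set n₀ := Nat.find exists_complete
  obtain ⟨hyn₀, hKn₀⟩ := Nat.find_spec exists_complete
  set δ := ENNReal.ofReal ((L + 1) / K)
  set incomplete : ℤ → ℝ≥0∞ := fun x => ⨆ n : ℕ,
    ‖invFourier ((if y ^ 2 < 2 ^ n ∧ K ^ 10 ≤ 2 ^ n ∧ (2 : ℝ) ^ n < (2 * K) ^ 10 then
      blockMultiplier χ y b K n else 0) * H) x‖ₑ
  set complete : ℤ → ℝ≥0∞ := fun x => ⨆ k, ‖invFourier (blockMultiplier χ y b K (n₀ + k) * H) x‖ₑ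
  have split (x : ℤ) : ⨆ (n : ℕ) (_ : y ^ 2 < 2 ^ n),
      ‖invFourier (blockMultiplier χ y b K n * H) x‖ₑ ≤ (incomplete + complete) x := by
    refine iSup₂_le fun n hn => ?_
    rcases lt_or_ge ((2 : ℝ) ^ n) (K ^ 10) with hlt | hle
    · simp [blockMultiplier_eq_zero hy hK0 hlt, invFourier]
    rcases lt_or_ge ((2 : ℝ) ^ n) ((2 * K) ^ 10) with hlt' | hle'
    · refine le_add_right (le_iSup_of_le n ?_)
      rw [if_pos ⟨hn, hle, hlt'⟩]
    · obtain ⟨k, rfl⟩ := Nat.exists_eq_add_of_le (Nat.find_min' exists_complete ⟨hn, hle'⟩)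
      exact le_add_left (le_iSup_of_le k le_rfl)
  calc _ ≤ eLpNorm (incomplete + complete) 2 count := eLpNorm_mono_enorm split
    _ ≤ eLpNorm incomplete 2 count + eLpNorm complete 2 count :=
        eLpNorm_add_le (measurable_of_countable _).aestronglyMeasurable
          (measurable_of_countable _).aestronglyMeasurable one_le_two
    _ ≤ 10 * (δ * 2) * eLpNorm H 2 circleMeasure +
        ((2 * L : ℕ) + 20) * (δ * 317 * eLpNorm H 2 circleMeasure) := by
        gcongr
        exacts [eLpNorm_iSup_incomplete_block_le hχ hy hb hK0 hL hH,
          eLpNorm_iSup_complete_block_le hχ hy hb hK hL hyn₀.le hKn₀ hH]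
    _ = ((634 * L + 6360 : ℕ) * δ) * eLpNorm H 2 circleMeasure := by push_cast; ring
    _ ≤ ENNReal.ofReal (6360 * ((L + 1) ^ 2 / K)) * eLpNorm H 2 circleMeasure := by
        rw [← ENNReal.ofReal_natCast, ← ENNReal.ofReal_mul (by positivity)]
        gcongr ENNReal.ofReal ?_ * _
        rw [mul_div_assoc', mul_div_assoc', sq, ← mul_assoc]
        gcongr
        push_cast
        linarith [L.cast_nonneg (α := ℝ)]

end HeightBlock

/-! ### Summing over the blocks -/

section DyadicHeights

/-- The reduced fractions `a / q` over which `HiK χ y b N Q` sums, encoded as `⟨q, a⟩`. -/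
def highFractions (y N : ℕ) (Q : ℝ) : Finset (Σ _ : ℕ, ℕ) :=
  ((Finset.Icc 1 (y * ⌈(N : ℝ) ^ ((1 : ℝ) / 10)⌉₊)).filter fun q : ℕ =>
    Q ≤ hgt y q ∧ (hgt y q : ℝ) ≤ (N : ℝ) ^ ((1 : ℝ) / 10)).sigma
    fun q => (Finset.Icc 1 q).filter fun a => Nat.gcd a q = 1

variable {χ : ℝ → ℝ} {y : ℕ} {b : ℤ} {Q : ℝ}

lemma natCast_le_rpow_one_div_iff {h N : ℕ} :
    (h : ℝ) ≤ (N : ℝ) ^ ((1 : ℝ) / 10) ↔ h ^ 10 ≤ N := by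
  rw [one_div, Real.le_rpow_inv_iff_of_pos h.cast_nonneg N.cast_nonneg (by norm_num)]
  exact_mod_cast Iff.rfl

lemma mem_highFractions (hy : 0 < y) (hQ : 0 < Q) {N : ℕ} {p : Σ _ : ℕ, ℕ} :
    p ∈ highFractions y N Q ↔ (Q ≤ hgt y p.1 ∧ hgt y p.1 ^ 10 ≤ N) ∧
      (1 ≤ p.2 ∧ p.2 ≤ p.1) ∧ Nat.gcd p.2 p.1 = 1 := by
  simp only [highFractions, Finset.mem_sigma, Finset.mem_filter, Finset.mem_Icc, and_assoc,
    natCast_le_rpow_one_div_iff]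
  refine ⟨fun h => h.2.2, fun h => ⟨h.2.2.1.trans h.2.2.2.1, ?_, h⟩⟩
  refine (le_mul_hgt hy (Nat.cast_ne_zero.1 (hQ.trans_le h.1).ne')).trans ?_
  exact Nat.mul_le_mul_left y
    (Nat.cast_le.1 ((natCast_le_rpow_one_div_iff.2 h.2.1).trans (Nat.le_ceil _)))

lemma HiConv_eq_sum_invFourier (hχ : IsCutoff χ) (y N : ℕ) (b : ℤ) (Q : ℝ) (F : Finset ℤ)
    (x : ℤ) : HiConv χ y b N Q F x =
      ∑ p ∈ highFractions y N Q, invFourier (Lhat χ y b N p.2 p.1 * expSum F) x := by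
  have HiK_eq (z : ℤ) : HiK χ y b N Q z = ∑ p ∈ highFractions y N Q, Lker χ y b N p.2 p.1 z :=
    Finset.sum_sigma' ..
  simp only [HiConv, HiK_eq]
  rw [Finset.sum_comm]
  exact Finset.sum_congr rfl fun p _ =>
    sum_invFourier_sub ((memLp_Lhat hχ y b N p).mono_exponent le_top) F x

lemma log_floor_div_eq_iff {h : ℝ} (hQ : 0 < Q) (hQh : Q ≤ h) (j : ℕ) :
    Nat.log 2 ⌊h / Q⌋₊ = j ↔ 2 ^ j * Q ≤ h ∧ h < 2 * (2 ^ j * Q) := by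
  have floor_pos : 0 < ⌊h / Q⌋₊ := Nat.floor_pos.2 ((one_le_div hQ).2 hQh)
  rw [Nat.log_eq_iff (Or.inr ⟨one_lt_two, floor_pos.ne'⟩), Nat.le_floor_iff' (by positivity),
    Nat.floor_lt' (by positivity), le_div_iff₀ hQ, div_lt_iff₀ hQ, pow_succ', ← mul_assoc]
  push_cast
  rfl

lemma filter_highFractions_eq_filter_heightBlock (hy : 0 < y) (hQ : 0 < Q) (N j : ℕ) :
    (highFractions y N Q).filter (fun p => Nat.log 2 ⌊hgt y p.1 / Q⌋₊ = j) =
      (heightBlock y (2 ^ j * Q)).filter fun p => hgt y p.1 ^ 10 ≤ N := by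
  ext p
  rw [Finset.mem_filter, Finset.mem_filter, mem_highFractions hy hQ,
    mem_heightBlock hy (by positivity)]
  have le_of_block (h : 2 ^ j * Q ≤ hgt y p.1) : Q ≤ hgt y p.1 :=
    (le_mul_of_one_le_left hQ.le (one_le_pow₀ one_le_two)).trans h
  constructor
  · rintro ⟨⟨⟨hQp, hpN⟩, hp⟩, hj⟩
    exact ⟨⟨(log_floor_div_eq_iff hQ hQp j).1 hj, hp⟩, hpN⟩
  · rintro ⟨⟨hj, hp⟩, hpN⟩
    have hQp := le_of_block hj.1
    exact ⟨⟨⟨hQp, hpN⟩, hp⟩, (log_floor_div_eq_iff hQ hQp j).2 hj⟩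

lemma log_floor_div_lt (hQ : 1 ≤ Q) {h N : ℕ} (hN : 0 < N) (hhN : h ^ 10 ≤ N) :
    Nat.log 2 ⌊h / Q⌋₊ < N := by
  have floor_le : ⌊h / Q⌋₊ ≤ N :=
    (Nat.floor_le_of_le (div_le_self h.cast_nonneg hQ)).trans
      ((Nat.le_self_pow (by norm_num) h).trans hhN)
  exact (Nat.log_mono_right floor_le).trans_lt (Nat.log_lt_self 2 hN.ne')

lemma HiConv_eq_sum_blockMultiplier (hχ : IsCutoff χ) (hy : 0 < y) (b : ℤ) (hQ : 1 ≤ Q) (n : ℕ)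
    (F : Finset ℤ) (x : ℤ) : HiConv χ y b (2 ^ n) Q F x =
      ∑ j ∈ Finset.range (2 ^ n),
        invFourier (blockMultiplier χ y b (2 ^ j * Q) n * expSum F) x := by
  have hQ0 : 0 < Q := by linarith
  have log_mem : ∀ p ∈ highFractions y (2 ^ n) Q,
      Nat.log 2 ⌊hgt y p.1 / Q⌋₊ ∈ Finset.range (2 ^ n) := fun p hp =>
    Finset.mem_range.2 <|
      log_floor_div_lt hQ (by positivity) ((mem_highFractions hy hQ0).1 hp).1.2
  rw [HiConv_eq_sum_invFourier hχ, ← Finset.sum_fiberwise_of_maps_to log_mem]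
  refine Finset.sum_congr rfl fun j _ => ?_
  rw [filter_highFractions_eq_filter_heightBlock hy hQ0, blockMultiplier, Finset.sum_mul,
    invFourier_sum fun p _ => (memLp_expSum F).mul (memLp_Lhat hχ y b (2 ^ n) p) |>.mono_exponent
      le_top]
  push_cast
  rfl

lemma eLpNorm_iSup_HiConv_le_tsum (hχ : IsCutoff χ) (hy : 0 < y) (hb : Int.gcd b y = 1)
    (hQ : 1 ≤ Q) {L : ℕ} (hL : 2 * Q ≤ 2 ^ L) (F : Finset ℤ) :
    eLpNorm (fun x => ⨆ (n : ℕ) (_ : y ^ 2 < 2 ^ n), ‖HiConv χ y b (2 ^ n) Q F x‖ₑ) 2 count ≤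
      ∑' j : ℕ, ENNReal.ofReal (6360 * (((j + L : ℕ) + 1) ^ 2 / (2 ^ j * Q))) *
        (F.card : ℝ≥0∞) ^ (1 / 2 : ℝ) := by
  set block : ℕ → ℤ → ℝ≥0∞ := fun j x => ⨆ (n : ℕ) (_ : y ^ 2 < 2 ^ n),
    ‖invFourier (blockMultiplier χ y b (2 ^ j * Q) n * expSum F) x‖ₑ
  have le_tsum_block (x : ℤ) :
      ⨆ (n : ℕ) (_ : y ^ 2 < 2 ^ n), ‖HiConv χ y b (2 ^ n) Q F x‖ₑ ≤ ∑' j, block j x := by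
    refine iSup₂_le fun n hn => ?_
    rw [HiConv_eq_sum_blockMultiplier hχ hy b hQ]
    refine (enorm_sum_le _ _).trans ((ENNReal.sum_le_tsum _).trans (ENNReal.tsum_le_tsum ?_))
    exact fun j => le_iSup₂_of_le n hn le_rfl
  have scale_le (j : ℕ) : 2 * (2 ^ j * Q) ≤ 2 ^ (j + L) := by
    rw [pow_add, mul_left_comm]
    gcongr
  calc _ ≤ eLpNorm (fun x => ∑' j, block j x) 2 count := eLpNorm_mono_enorm le_tsum_block
    _ ≤ ∑' j, eLpNorm (block j) 2 count :=
        eLpNorm_tsum_le one_le_two ENNReal.ofNat_ne_top fun _ => measurable_of_countable _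
    _ ≤ _ := by
        gcongr with j
        rw [← eLpNorm_expSum]
        exact eLpNorm_iSup_block_le hχ hy hb
          (one_le_mul_of_one_le_of_one_le (one_le_pow₀ one_le_two) hQ) (scale_le j)
          ((memLp_expSum F).mono_exponent le_top)

end DyadicHeights

lemma summable_add_one_sq_mul_geometric :
    Summable fun j : ℕ => ((j : ℝ) + 1) ^ 2 * (1 / 2) ^ j := by
  have shifted := (summable_nat_add_iff 1).2
    (summable_pow_mul_geometric_of_norm_lt_one 2 (r := (1 / 2 : ℝ)) (by norm_num))
  refine (shifted.mul_left 2).congr fun j => ?_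
  push_cast
  ring

lemma exists_two_mul_le_two_pow_add_one_le {δ Q : ℝ} (hδ : 0 < δ) (hQ : 1 ≤ Q) :
    ∃ L : ℕ, 2 * Q ≤ 2 ^ L ∧ (L : ℝ) + 1 ≤ (3 + 2 / δ) * Q ^ δ := by
  have hQ0 : 0 < Q := by linarith
  have log_nonneg : 0 ≤ Real.logb 2 (2 * Q) := Real.logb_nonneg one_lt_two (by linarith)
  refine ⟨⌈Real.logb 2 (2 * Q)⌉₊, ?_, ?_⟩
  · rw [← Real.rpow_natCast, ← Real.logb_le_iff_le_rpow one_lt_two (by positivity)]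
    exact Nat.le_ceil _
  have logb_two_mul : Real.logb 2 (2 * Q) = 1 + Real.logb 2 Q := by
    rw [Real.logb_mul two_ne_zero hQ0.ne', Real.logb_self_eq_one one_lt_two]
  have logb_le : Real.logb 2 Q ≤ 2 * Real.log Q := by
    rw [Real.logb, div_le_iff₀ (Real.log_pos one_lt_two)]
    nlinarith [Real.log_two_gt_d9, Real.log_nonneg hQ]
  calc (⌈Real.logb 2 (2 * Q)⌉₊ : ℝ) + 1 ≤ Real.logb 2 (2 * Q) + 2 := by
        linarith [Nat.ceil_lt_add_one log_nonneg]
    _ ≤ 3 + 2 * Real.log Q := by linarith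
    _ ≤ 3 * Q ^ δ + 2 * (Q ^ δ / δ) := by
        gcongr
        exacts [le_mul_of_one_le_right (by norm_num) (Real.one_le_rpow hQ hδ.le),
          Real.log_le_rpow_div hQ0.le hδ]
    _ = (3 + 2 / δ) * Q ^ δ := by ring

lemma add_one_sq_div_le {c Q δ : ℝ} {L : ℕ} (hQ : 0 < Q)
    (hL : (L : ℝ) + 1 ≤ c * Q ^ δ) (j : ℕ) :
    (((j + L : ℕ) : ℝ) + 1) ^ 2 / (2 ^ j * Q) ≤
      c ^ 2 * Q ^ (-1 + 2 * δ) * ((j + 1) ^ 2 * (1 / 2) ^ j) := by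
  have add_one_le : ((j + L : ℕ) : ℝ) + 1 ≤ (j + 1) * (L + 1) := by
    push_cast
    nlinarith [mul_nonneg (j.cast_nonneg (α := ℝ)) (L.cast_nonneg (α := ℝ))]
  have rpow_eq : Q ^ (-1 + 2 * δ) = (Q ^ δ) ^ 2 / Q := by
    rw [Real.rpow_add hQ, Real.rpow_neg_one, ← Real.rpow_mul_natCast hQ.le, mul_comm 2 δ,
      div_eq_inv_mul, Nat.cast_two]
  calc (((j + L : ℕ) : ℝ) + 1) ^ 2 / (2 ^ j * Q)
      ≤ ((j + 1) * (c * Q ^ δ)) ^ 2 / (2 ^ j * Q) := by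
        gcongr
        exact add_one_le.trans (by gcongr)
    _ = c ^ 2 * Q ^ (-1 + 2 * δ) * ((j + 1) ^ 2 * (1 / 2) ^ j) := by
        rw [rpow_eq, one_div, inv_pow]
        field_simp

lemma tsum_ofReal_add_one_sq_div_le {c Q δ : ℝ} {L : ℕ} (hQ : 0 < Q)
    (hL : (L : ℝ) + 1 ≤ c * Q ^ δ) {A : ℝ} (hA : 0 ≤ A) :
    ∑' j : ℕ, ENNReal.ofReal (A * (((j + L : ℕ) + 1) ^ 2 / (2 ^ j * Q))) ≤
      ENNReal.ofReal
        (A * (c ^ 2 * ∑' j : ℕ, ((j : ℝ) + 1) ^ 2 * (1 / 2) ^ j) * Q ^ (-1 + 2 * δ)) := by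
  calc _ ≤ ∑' j : ℕ, ENNReal.ofReal
        (A * (c ^ 2 * Q ^ (-1 + 2 * δ)) * (((j : ℝ) + 1) ^ 2 * (1 / 2) ^ j)) := by
        gcongr ∑' j, ENNReal.ofReal ?_ with j
        rw [mul_assoc A]
        gcongr
        exact add_one_sq_div_le hQ hL j
    _ = _ := by
        rw [← ENNReal.ofReal_tsum_of_nonneg (fun j => by positivity)
          (summable_add_one_sq_mul_geometric.mul_left _), tsum_mul_left]
        ring_nf

theorem high_term_maximal_general {ε : ℝ} (hε : 0 < ε) :
    ∃ C : ℝ, 0 < C ∧ ∀ χ : ℝ → ℝ, IsCutoff χ → ∀ y : ℕ, 1 ≤ y → ∀ b : ℤ, Int.gcd b y = 1 →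
      ∀ Q : ℝ, 1 ≤ Q → ∀ F : Finset ℤ,
        eLpNorm (fun x => ⨆ (n : ℕ) (_ : y ^ 2 < 2 ^ n), ‖HiConv χ y b (2 ^ n) Q F x‖ₑ) 2 count ≤
          ENNReal.ofReal (C * Q ^ (-1 + ε) * (F.card : ℝ) ^ ((1 : ℝ) / 2)) := by
  set S := ∑' j : ℕ, ((j : ℝ) + 1) ^ 2 * (1 / 2) ^ j
  have S_pos : 0 < S :=
    summable_add_one_sq_mul_geometric.tsum_pos (fun _ => by positivity) 0 (by norm_num)
  refine ⟨6360 * ((3 + 2 / (ε / 2)) ^ 2 * S), by positivity, fun χ hχ y hy b hb Q hQ F => ?_⟩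
  have hQ0 : 0 < Q := by linarith
  obtain ⟨L, hL, hLQ⟩ := exists_two_mul_le_two_pow_add_one_le (half_pos hε) hQ
  refine (eLpNorm_iSup_HiConv_le_tsum hχ hy hb hQ hL F).trans ?_
  rw [ENNReal.tsum_mul_right, ENNReal.ofReal_mul (by positivity),
    ← ENNReal.ofReal_rpow_of_nonneg (by positivity) (by norm_num), ENNReal.ofReal_natCast]
  gcongr
  simpa only [mul_div_cancel₀ ε two_ne_zero] using
    tsum_ofReal_add_one_sq_div_le hQ0 hLQ (A := 6360) (by norm_num)

theorem high_term_maximal (χ : ℝ → ℝ) (hχs : ContDiff ℝ (⊤ : ℕ∞) χ)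
    (hχr : ∀ x : ℝ, χ x ∈ Set.Icc (0 : ℝ) 1)
    (hχ1 : ∀ x ∈ Set.Icc (-(1/16) : ℝ) (1/16), χ x = 1)
    (hχ0 : ∀ x : ℝ, x ∉ Set.Icc (-(1/4) : ℝ) (1/4) → χ x = 0) :
    ∀ ε : ℝ, 0 < ε →
      ∃ C : ℝ, 0 < C ∧
        ∀ y : ℕ, 1 ≤ y →
          ∃ N0 : ℕ,
            ∀ b : ℤ, Int.gcd b y = 1 →
              ∀ Q : ℝ, 1 ≤ Q →
                ∀ F : Finset ℤ,
                  (∑' x : ℤ,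
                      (⨆ (n : ℕ)
                          (_ : N0 < 2 ^ n ∧ Q ≤ ((2 ^ n : ℕ) : ℝ) ^ ((1:ℝ)/10)),
                        (‖HiConv χ y b (2 ^ n) Q F x‖₊ : ℝ≥0∞)) ^ (2:ℝ)) ^ ((1:ℝ)/2) ≤
                    ENNReal.ofReal (C * Q ^ (-1 + ε) * (F.card : ℝ) ^ ((1:ℝ)/2)) := by
  intro ε hε
  have hχ : IsCutoff χ :=
    { measurable := hχs.continuous.measurable
      abs_le_one := fun x => abs_le.2 ⟨by linarith [(hχr x).1], (hχr x).2⟩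
      abs_le_of_ne_zero := fun x hx => abs_le.2 (not_imp_comm.1 (hχ0 x) hx) }
  obtain ⟨C, C_pos, hC⟩ := high_term_maximal_general hε
  refine ⟨C, C_pos, fun y hy => ⟨y ^ 2, fun b hb Q hQ F => ?_⟩⟩
  refine le_trans ?_ (hC χ hχ y hy b hb Q hQ F)
  rw [eLpNorm_eq_lintegral_rpow_enorm_toReal two_ne_zero ENNReal.ofNat_ne_top, lintegral_count]
  simp only [ENNReal.toReal_ofNat, enorm_eq_self]
  gcongr
  exact iSup_const_mono And.left

end
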